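/- arXiv:2004.00576 — 2 statements merged into one kernel-verified Lean document; each statement's English description precedes it below -/
import Mathlib

section
/- Let (A,Λ) be any associative form ring, let (I,Γ) and (J,Δ) be two form ideals of (A,Λ), and let n ≥ 3. Then the stability map [FU(2n,I,Γ), FU(2n,J,Δ)]/EU(2n,(I,Γ)∘(J,Δ)) → [FU(2(n+1),I,Γ), FU(2(n+1),J,Δ)]/EU(2(n+1),(I,Γ)∘(J,Δ)), induced by the standard embedding of 2n×2n matrices into 2(n+1)×2(n+1) matrices (which sends each elementary unitary transvection T_ij(c) of degree 2n to the transvection with the same indices and parameter of degree 2(n+1)), is surjective. -/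
open Matrix
open scoped commutatorElement

/-- Bak's form ring data on a ring `A`: an involution `bar`, a central symmetry
`λ` with `λ λ̄ = 1`, and a form parameter `Λ`. -/
structure FormRingData (A : Type*) [Ring A] where
  bar : A →+ A
  bar_mul : ∀ a b : A, bar (a * b) = bar b * bar a
  bar_bar : ∀ a : A, bar (bar a) = a
  lam : A
  lam_comm : ∀ a : A, lam * a = a * lam
  lam_bar : lam * bar lam = 1
  Lambda : AddSubgroup A
  lambdaMin_mem : ∀ c : A, c - lam * bar c ∈ Lambda
  lambdaMax_mem : ∀ x ∈ Lambda, x = -(lam * bar x)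
  lambda_conj : ∀ (c : A), ∀ x ∈ Lambda, c * x * bar c ∈ Lambda

namespace FormRingData

variable {A : Type*} [Ring A]

/-- Integral powers of the symmetry `λ`; negative powers use `λ̄ = λ⁻¹`. -/
def lpow (D : FormRingData A) (k : ℤ) : A :=
  if 0 ≤ k then D.lam ^ k.toNat else (D.bar D.lam) ^ (-k).toNat

end FormRingData

/-- The index set `Ω = {1,…,n,−n,…,−1}`, coded as `Fin n × Bool`
(second component `true` = positive index). -/
abbrev Idx (n : ℕ) := Fin n × Bool

namespace Idx

/-- The involution `i ↦ −i` on indices. -/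
def neg {n : ℕ} (i : Idx n) : Idx n := (i.1, !i.2)

/-- The sign `ε(i) ∈ {±1}`. -/
def eps {n : ℕ} (i : Idx n) : ℤ := if i.2 then 1 else -1

theorem neg_ne {n : ℕ} (i : Idx n) : neg i ≠ i := by
  simp [neg, Prod.ext_iff]

theorem neg_injective {n : ℕ} : Function.Injective (neg (n := n)) := by
  intro i j h
  simp only [neg, Prod.mk.injEq] at h
  refine Prod.ext h.1 ?_
  have h2 := h.2
  cases hi : i.2 <;> cases hj : j.2 <;> simp_all

theorem neg_neg {n : ℕ} (i : Idx n) : neg (neg i) = i := by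
  simp [neg]

end Idx

/-- `GL(2n, A)`, realised as the units of the `Ω × Ω` matrix ring over `A`. -/
abbrev GLn (A : Type*) [Ring A] (n : ℕ) := (Matrix (Idx n) (Idx n) A)ˣ

section aux

theorem one_add_mul_one_sub {R : Type*} [Ring R] {X : R} (h : X * X = 0) :
    (1 + X) * (1 - X) = 1 := by
  have hh : (1 + X) * (1 - X) = 1 - X * X := by noncomm_ring
  rw [hh, h, sub_zero]

theorem one_sub_mul_one_add {R : Type*} [Ring R] {X : R} (h : X * X = 0) :
    (1 - X) * (1 + X) = 1 := by
  have hh : (1 - X) * (1 + X) = 1 - X * X := by noncomm_ring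
  rw [hh, h, sub_zero]

theorem stdBasisMatrix_neg' {A : Type*} [Ring A] {n : ℕ} (i j : Idx n) (c : A) :
    Matrix.single i j (-c) = -Matrix.single i j c := by
  refine eq_neg_of_add_eq_zero_left ?_
  rw [← Matrix.single_add]
  simp

end aux

namespace FormRingData

variable {A : Type*} [Ring A] {n : ℕ}

/-- The off-diagonal part of a short root element. -/
def Xmat (D : FormRingData A) (i j : Idx n) (c : A) : Matrix (Idx n) (Idx n) A :=
  Matrix.single i j c -
    Matrix.single (Idx.neg j) (Idx.neg i) (D.lpow ((Idx.eps j - Idx.eps i) / 2) * D.bar c)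

theorem Xmat_mul (D : FormRingData A) {i j : Idx n} (hij : i ≠ j) (c c' : A) :
    D.Xmat i j c * D.Xmat i j c' = 0 := by
  unfold Xmat
  rw [sub_mul, mul_sub, mul_sub,
    Matrix.single_mul_single_of_ne _ _ _ _ (Ne.symm hij),
    Matrix.single_mul_single_of_ne _ _ _ _ (Ne.symm (Idx.neg_ne j)),
    Matrix.single_mul_single_of_ne _ _ _ _ (Idx.neg_ne i),
    Matrix.single_mul_single_of_ne _ _ _ _ (fun h => hij (Idx.neg_injective h))]
  simp

theorem Xmat_neg (D : FormRingData A) (i j : Idx n) (c : A) :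
    D.Xmat i j (-c) = -D.Xmat i j c := by
  unfold Xmat
  rw [map_neg, mul_neg, stdBasisMatrix_neg', stdBasisMatrix_neg']
  abel

/-- The elementary short root unipotent `T_{ij}(c)`, for `i ≠ ±j`
(with junk value `1` when `i = j`). -/
def TS (D : FormRingData A) (i j : Idx n) (c : A) : GLn A n :=
  if h : i = j then 1 else
    { val := 1 + D.Xmat i j c
      inv := 1 + D.Xmat i j (-c)
      val_inv := by
        rw [D.Xmat_neg, ← sub_eq_add_neg]
        exact one_add_mul_one_sub (D.Xmat_mul h c c)
      inv_val := by
        rw [D.Xmat_neg, ← sub_eq_add_neg]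
        exact one_sub_mul_one_add (D.Xmat_mul h c c) }

/-- The elementary long root unipotent `T_{i,−i}(c)`. -/
def TL (D : FormRingData A) (i : Idx n) (c : A) : GLn A n where
  val := 1 + Matrix.single i (Idx.neg i) c
  inv := 1 + Matrix.single i (Idx.neg i) (-c)
  val_inv := by
    rw [stdBasisMatrix_neg', ← sub_eq_add_neg]
    exact one_add_mul_one_sub (Matrix.single_mul_single_of_ne _ _ _ _ (Idx.neg_ne i) _)
  inv_val := by
    rw [stdBasisMatrix_neg', ← sub_eq_add_neg]
    exact one_sub_mul_one_add (Matrix.single_mul_single_of_ne _ _ _ _ (Idx.neg_ne i) _)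

/-- The elementary unitary transvection `T_{ij}(c)` (long or short root type
according to whether `j = −i`). -/
def T (D : FormRingData A) (i j : Idx n) (c : A) : GLn A n :=
  if j = Idx.neg i then D.TL i c else D.TS i j c

/-- The elementary commutator `Y_{ij}(a,b) = [T_{ij}(a), T_{ji}(b)]`. -/
def Y (D : FormRingData A) (i j : Idx n) (a b : A) : GLn A n :=
  ⁅D.T i j a, D.T j i b⁆

/-- The elementary conjugate `Z_{ij}(a,c) = T_{ji}(c) T_{ij}(a) T_{ji}(−c)`. -/
def Z (D : FormRingData A) (i j : Idx n) (a c : A) : GLn A n :=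
  D.T j i c * D.T i j a * D.T j i (-c)

/-- The set of elementary unitary transvections of level `(I,Γ)`. -/
def transvGen (D : FormRingData A) (n : ℕ) (I Γ : AddSubgroup A) : Set (GLn A n) :=
  {x | ∃ i j : Idx n, i ≠ j ∧ i ≠ Idx.neg j ∧ ∃ c ∈ I, x = D.TS i j c} ∪
    {x | ∃ i : Idx n, ∃ g ∈ Γ, x = D.TL i (D.lpow (-(Idx.eps i + 1) / 2) * g)}

/-- The unrelative elementary subgroup `FU(2n, I, Γ)`. -/
def FU (D : FormRingData A) (n : ℕ) (I Γ : AddSubgroup A) : Subgroup (GLn A n) :=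
  Subgroup.closure (D.transvGen n I Γ)

/-- The absolute elementary unitary group `EU(2n, A, Λ)`. -/
def EUmax (D : FormRingData A) (n : ℕ) : Subgroup (GLn A n) :=
  D.FU n ⊤ D.Lambda

/-- The relative elementary subgroup `EU(2n, I, Γ)`: the normal closure of
`FU(2n, I, Γ)` in `EU(2n, A, Λ)`. -/
def EU (D : FormRingData A) (n : ℕ) (I Γ : AddSubgroup A) : Subgroup (GLn A n) :=
  Subgroup.closure {x | ∃ g ∈ D.EUmax n, ∃ t ∈ D.transvGen n I Γ, x = g * t * g⁻¹}

/-- The additive subgroup generated by products `st`, `s ∈ S`, `t ∈ T`. -/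
def mulSub (S T : AddSubgroup A) : AddSubgroup A :=
  AddSubgroup.closure {x | ∃ a ∈ S, ∃ b ∈ T, x = a * b}

/-- The symmetrised product `ST + TS` of two (additive subgroups underlying)
two-sided ideals. -/
def symI (S T : AddSubgroup A) : AddSubgroup A :=
  mulSub S T ⊔ mulSub T S

/-- The minimal relative form parameter `Γ_min(K)` of level `K`. -/
def gammaMin (D : FormRingData A) (K : AddSubgroup A) : AddSubgroup A :=
  AddSubgroup.closure
    ({x | ∃ a ∈ K, x = a - D.lam * D.bar a} ∪
      {x | ∃ a ∈ K, ∃ c ∈ D.Lambda, x = a * c * D.bar a})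

/-- The relative form parameter `ˢΓ = ⟨ b γ b̄ ∣ b ∈ S, γ ∈ Γ ⟩`. -/
def conjPar (D : FormRingData A) (S Γ : AddSubgroup A) : AddSubgroup A :=
  AddSubgroup.closure {x | ∃ b ∈ S, ∃ g ∈ Γ, x = b * g * D.bar b}

/-- The relative form parameter of the symmetrised product
`(I,Γ)∘(J,Δ) = (IJ+JI, Γ_min(IJ+JI) + ᴶΓ + ᴵΔ)`. -/
def symG (D : FormRingData A) (I Γ J Δ : AddSubgroup A) : AddSubgroup A :=
  D.gammaMin (symI I J) ⊔ D.conjPar J Γ ⊔ D.conjPar I Δ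

/-- The elementary subgroup `EU(2n, (I,Γ)∘(J,Δ))` of the symmetrised product. -/
def EUsym (D : FormRingData A) (n : ℕ) (I Γ J Δ : AddSubgroup A) : Subgroup (GLn A n) :=
  D.EU n (symI I J) (D.symG I Γ J Δ)

/-- Position-dependent membership `a ∈ (I,Γ)` at position `(i,j)`:
`a ∈ I` for a short root position, `a ∈ λ^{−(ε(i)+1)/2}Γ` for a long one. -/
def pmem (D : FormRingData A) (I Γ : AddSubgroup A) {n : ℕ} (i j : Idx n) (a : A) : Prop :=
  if j = Idx.neg i then ∃ g ∈ Γ, a = D.lpow (-(Idx.eps i + 1) / 2) * g else a ∈ I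

end FormRingData

/-- A form ideal `(I,Γ)` of the form ring `(A,Λ)`. -/
structure FormIdeal {A : Type*} [Ring A] (D : FormRingData A) where
  I : AddSubgroup A
  Gamma : AddSubgroup A
  mul_mem_left : ∀ (c : A), ∀ x ∈ I, c * x ∈ I
  mul_mem_right : ∀ (c : A), ∀ x ∈ I, x * c ∈ I
  bar_mem : ∀ x ∈ I, D.bar x ∈ I
  gammaMin_le : D.gammaMin I ≤ Gamma
  gamma_le_I : Gamma ≤ I
  gamma_le_Lambda : Gamma ≤ D.Lambda
  gamma_conj : ∀ (c : A), ∀ x ∈ Gamma, c * x * D.bar c ∈ Gamma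

/-- `Fin 1 × Bool ≃ Bool`. -/
def finBoolEquiv : Fin 1 × Bool ≃ Bool where
  toFun p := p.2
  invFun b := (0, b)
  left_inv p := by
    obtain ⟨i, b⟩ := p
    have hi : (0 : Fin 1) = i := Subsingleton.elim _ _
    simp [← hi]
  right_inv b := rfl

/-- The standard identification `Ω_n ⊔ {±(n+1)} ≃ Ω_{n+1}`. -/
def idxSumEquiv (n : ℕ) : Idx n ⊕ Bool ≃ Idx (n + 1) :=
  ((Equiv.refl (Idx n)).sumCongr finBoolEquiv.symm).trans <|
    ((Equiv.sumProdDistrib (Fin n) (Fin 1) Bool).symm).trans <|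
      finSumFinEquiv.prodCongr (Equiv.refl Bool)

/-- The standard embedding of `2n × 2n` matrices into `2(n+1) × 2(n+1)`
matrices (direct sum with the identity block). -/
def embMat {A : Type*} [Ring A] (n : ℕ) (M : Matrix (Idx n) (Idx n) A) :
    Matrix (Idx (n + 1)) (Idx (n + 1)) A :=
  (Matrix.fromBlocks M 0 0 (1 : Matrix Bool Bool A)).submatrix
    (idxSumEquiv n).symm (idxSumEquiv n).symm

theorem embMat_one {A : Type*} [Ring A] (n : ℕ) :
    embMat n (1 : Matrix (Idx n) (Idx n) A) = 1 := by
  simp [embMat, Matrix.fromBlocks_one, Matrix.submatrix_one_equiv]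

theorem embMat_mul {A : Type*} [Ring A] (n : ℕ) (M N : Matrix (Idx n) (Idx n) A) :
    embMat n (M * N) = embMat n M * embMat n N := by
  unfold embMat
  rw [Matrix.submatrix_mul_equiv _ _ _ (idxSumEquiv n).symm _,
    Matrix.fromBlocks_multiply]
  simp

/-- The standard embedding as a multiplicative map. -/
def embHom (A : Type*) [Ring A] (n : ℕ) :
    Matrix (Idx n) (Idx n) A →* Matrix (Idx (n + 1)) (Idx (n + 1)) A where
  toFun := embMat n
  map_one' := embMat_one n
  map_mul' := embMat_mul n

/-- The standard stability embedding `GL(2n,A) → GL(2(n+1),A)`, sending each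
elementary unitary transvection of degree `2n` to the transvection with the
same indices and parameter of degree `2(n+1)`. -/
def embGL (A : Type*) [Ring A] (n : ℕ) : GLn A n →* GLn A (n + 1) :=
  Units.map (embHom A n)

/-!
Modulo `EU(2(n+1), (I,Γ)∘(J,Δ))` every transvection of level the symmetrised product is trivial, so
a generator `T_{ij}(a)` of `FU(I,Γ)` commutes with a generator `T_{hk}(b)` of `FU(J,Δ)` unless the
two positions are opposite. The commutators `Y_{ij}(a,b) = [T_{ij}(a), T_{ji}(b)]` that remain are
central: by the Steinberg relations they commute with every `T_{kl}(c)` with `k ≠ ±i, ±j`, by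
duality with every `T_{kl}(c)` with `l ≠ ±i, ±j`, and as there is a third pair of indices these
elements generate everything. Hence the commutator subgroup is generated by the `Y_{ij}(a,b)`.

To remove the indices `±(n+1)`, take a commuting pair of elements and conjugate both by `T_{ik}(1)`:
each becomes a product of root elements, and the commutator of the products, which is still
trivial, is a product of elementary commutators. This expresses `Y_{ij}(a,b)` through
`Y_{kj}(a,-b)`, and `Y_{i,-i}(x,y)` through `Y_{k,-k}(x,y)` and the short commutator
`Y_{i,-k}(x,-y)`.
-/

section Commutators

variable {G : Type*} [Group G]

theorem commute_commutatorElement {x y z : G} (hx : Commute z x) (hy : Commute z y) :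
    Commute z ⁅x, y⁆ := by
  rw [commutatorElement_def]
  exact ((hx.mul_right hy).mul_right hx.inv_right).mul_right hy.inv_right

theorem commute_commutatorElement_of_mul_eq {x x' y z : G} (hy : Commute z y)
    (hx : z * x = x' * x * z) (hx'x : Commute x' x) (hx'y : Commute x' y) :
    Commute z ⁅x, y⁆ := by
  have hconj : z * x * z⁻¹ = x * x' := by rw [hx, mul_inv_cancel_right, hx'x.eq]
  have hfix : z * ⁅x, y⁆ * z⁻¹ = ⁅x, y⁆ := by
    rw [conjugate_commutatorElement, hconj, hy.eq, mul_inv_cancel_right,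
      commutatorElement_mul_left_eq_conj_mul, commutatorElement_eq_one_iff_commute.mpr hx'y,
      mul_one, mul_inv_cancel, one_mul]
  exact mul_inv_eq_iff_eq_mul.mp hfix

theorem commutatorElement_mul_mul_of_commute {x₁ x₂ y₁ y₂ : G} (hx : Commute x₁ x₂)
    (hxy : Commute x₁ y₂) (hyx : Commute y₁ x₂) (hy : Commute y₁ y₂) :
    ⁅x₁ * x₂, y₁ * y₂⁆ = ⁅x₂, y₂⁆ * ⁅x₁, y₁⁆ := by
  have h₁ : ⁅x₁, y₁ * y₂⁆ = ⁅x₁, y₁⁆ := by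
    rw [commutatorElement_mul_right_eq_mul_conj, commutatorElement_eq_one_iff_commute.mpr hxy,
      mul_one, mul_inv_cancel_right]
  have h₂ : ⁅x₂, y₁ * y₂⁆ = ⁅x₂, y₂⁆ := by
    rw [commutatorElement_mul_right_eq_mul_conj, commutatorElement_eq_one_iff_commute.mpr hyx.symm,
      one_mul, (commute_commutatorElement hyx hy).eq, mul_inv_cancel_right]
  rw [commutatorElement_mul_left_eq_conj_mul, h₁, h₂, (commute_commutatorElement hx hxy).eq,
    mul_inv_cancel_right]

theorem commutatorElement_mul_commutatorElement_eq_one_of_conj {g u v x₁ x₂ y₁ y₂ : G}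
    (huv : Commute u v) (hu : g * u = x₁ * x₂ * g) (hv : g * v = y₁ * y₂ * g)
    (hx : Commute x₁ x₂) (hxy : Commute x₁ y₂) (hyx : Commute y₁ x₂) (hy : Commute y₁ y₂) :
    ⁅x₂, y₂⁆ * ⁅x₁, y₁⁆ = 1 := by
  rw [← commutatorElement_mul_mul_of_commute hx hxy hyx hy, ← mul_inv_eq_of_eq_mul hu,
    ← mul_inv_eq_of_eq_mul hv, ← conjugate_commutatorElement,
    commutatorElement_eq_one_iff_commute.mpr huv, mul_one, mul_inv_cancel]

theorem normal_of_le_center {C : Subgroup G} (h : C ≤ Subgroup.center G) : C.Normal where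
  conj_mem x hx g := by rwa [Subgroup.mem_center_iff.mp (h hx) g, mul_inv_cancel_right]

theorem commutator_closure_le {X Y : Set G} {C : Subgroup G} [C.Normal]
    (h : ∀ x ∈ X, ∀ y ∈ Y, ⁅x, y⁆ ∈ C) : ⁅Subgroup.closure X, Subgroup.closure Y⁆ ≤ C := by
  rw [← QuotientGroup.ker_mk' C, ← Subgroup.map_eq_bot_iff, Subgroup.map_commutator,
    MonoidHom.map_closure, MonoidHom.map_closure, Subgroup.commutator_eq_bot_iff_le_centralizer,
    Subgroup.centralizer_closure, Subgroup.closure_le]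
  rintro _ ⟨x, hx, rfl⟩
  rw [SetLike.mem_coe, Subgroup.mem_centralizer_iff]
  rintro _ ⟨y, hy, rfl⟩
  have : ⁅QuotientGroup.mk' C x, QuotientGroup.mk' C y⁆ = 1 := by
    rw [← map_commutatorElement]
    exact (QuotientGroup.eq_one_iff _).mpr (h x hx y hy)
  exact (commutatorElement_eq_one_iff_mul_comm.mp this).symm

end Commutators

theorem one_add_mul_one_add_of_mul_self_eq_zero {R : Type*} [Ring R] {X Y : R}
    (hX : X * X = 0) (hY : Y * Y = 0) (hYXY : Y * (X * Y) = 0) :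
    (1 + X) * (1 + Y) = (1 + (X * Y - Y * X)) * (1 - X * Y * X) * (1 + Y) * (1 + X) := by
  have hXX (Z : R) : X * (X * Z) = 0 := by rw [← mul_assoc, hX, zero_mul]
  have hYXYX : Y * (X * (Y * X)) = 0 := by rw [← mul_assoc X, ← mul_assoc, hYXY, zero_mul]
  simp only [mul_add, add_mul, mul_sub, sub_mul, one_mul, mul_one, mul_assoc, hX, hY, hXX, hYXY,
    hYXYX, mul_zero, zero_mul]
  abel

theorem exists_ne_ne {m : ℕ} (hm : 3 ≤ m) (p q : Fin m) : ∃ k, k ≠ p ∧ k ≠ q :=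
  ENat.exists_ne_ne_of_three_le (by simpa using mod_cast hm) p q

namespace Idx

variable {m : ℕ} {i j : Idx m}

theorem eq_or_eq_neg_of_fst_eq (h : i.1 = j.1) : i = j ∨ i = neg j := by
  obtain ⟨p, s⟩ := i
  obtain ⟨q, t⟩ := j
  cases s <;> cases t <;> simp_all [neg]

theorem fst_ne_iff : i.1 ≠ j.1 ↔ i ≠ j ∧ i ≠ neg j :=
  ⟨fun h => ⟨fun e => h (by rw [e]), fun e => h (by rw [e]; rfl)⟩,
    fun h e => (eq_or_eq_neg_of_fst_eq e).elim h.1 h.2⟩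

theorem eq_neg_comm : i = neg j ↔ j = neg i :=
  ⟨fun h => by rw [h, neg_neg], fun h => by rw [h, neg_neg]⟩

end Idx

namespace FormRingData

variable {A : Type*} [Ring A] (D : FormRingData A) {m : ℕ}

section Scalars

theorem bar_one : D.bar 1 = 1 := by
  simpa only [D.bar_bar, mul_one] using (D.bar_mul (D.bar 1) 1).symm

theorem bar_lam_comm (c : A) : D.bar D.lam * c = c * D.bar D.lam := by
  simpa only [D.bar_mul, D.bar_bar] using congrArg D.bar (D.lam_comm (D.bar c)).symm

/-- The unit `λ^{−(ε(i)+1)/2}` by which the parameter of a long root element `T_{i,−i}` differs from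
an element of the form parameter. -/
def scale (i : Idx m) : A := D.lpow (-(Idx.eps i + 1) / 2)

theorem scale_eq_ite (i : Idx m) : D.scale i = if i.2 then D.bar D.lam else 1 := by
  cases h : i.2 <;> simp [scale, lpow, Idx.eps, h]

theorem scale_comm (i : Idx m) (c : A) : D.scale i * c = c * D.scale i := by
  rw [scale_eq_ite]
  split_ifs
  · exact D.bar_lam_comm c
  · rw [one_mul, mul_one]

theorem bar_scale_mul_scale (i : Idx m) : D.bar (D.scale i) * D.scale i = 1 := by
  rw [scale_eq_ite]
  split_ifs
  · rw [D.bar_bar, D.lam_bar]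
  · rw [D.bar_one, one_mul]

theorem scale_mul_bar_scale (i : Idx m) : D.scale i * D.bar (D.scale i) = 1 := by
  rw [scale_comm, bar_scale_mul_scale]

theorem scale_mul_scale_neg (i : Idx m) : D.scale i * D.scale (Idx.neg i) = D.bar D.lam := by
  cases h : i.2 <;> simp [scale_eq_ite, Idx.neg, h]

theorem bar_scale_neg (i : Idx m) : D.bar (D.scale (Idx.neg i)) = D.lam * D.scale i := by
  cases h : i.2 <;> simp [scale_eq_ite, Idx.neg, h, D.bar_bar, D.bar_one, D.lam_bar]

theorem lpow_mul_bar (i j : Idx m) (c : A) :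
    D.lpow ((Idx.eps j - Idx.eps i) / 2) * D.bar c =
      D.bar (D.scale j) * D.bar c * D.scale i := by
  cases hi : i.2 <;> cases hj : j.2 <;>
    simp [scale_eq_ite, lpow, Idx.eps, hi, hj, D.bar_bar, D.bar_one, D.bar_lam_comm, mul_assoc,
      D.lam_bar, D.lam_comm]

/-- The entry `−λ^{(ε(j)−ε(i))/2} c̄` of `T_{ij}(c)` at the dual position `(−j,−i)`, normalised as
`−κ̄_j c̄ κ_i` with `κ = scale`. -/
def dual (i j : Idx m) (c : A) : A := -(D.bar (D.scale j) * D.bar c * D.scale i)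

theorem dual_dual (i j : Idx m) (c : A) :
    D.dual (Idx.neg j) (Idx.neg i) (D.dual i j c) = c := by
  have hbar : D.bar (D.bar (D.scale j) * D.bar c * D.scale i) =
      D.bar (D.scale i) * c * D.scale j := by
    simp only [D.bar_mul, D.bar_bar, mul_assoc]
  calc D.dual (Idx.neg j) (Idx.neg i) (D.dual i j c)
      = D.lam * (D.scale i * D.bar (D.scale i)) * (c * (D.scale j * D.scale (Idx.neg j))) := by
        rw [dual, dual, map_neg, hbar, bar_scale_neg]
        simp only [mul_neg, neg_mul, _root_.neg_neg, mul_assoc]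
    _ = c := by
        rw [scale_mul_bar_scale, scale_mul_scale_neg, mul_one, ← D.bar_lam_comm, ← mul_assoc,
          D.lam_bar, one_mul]

theorem dual_mul_dual (i j k : Idx m) (a b : A) :
    D.dual j k b * D.dual i j a = -D.dual i k (a * b) := by
  simp only [dual, mul_neg, neg_mul, _root_.neg_neg, D.bar_mul, mul_assoc]
  rw [← mul_assoc (D.scale j), scale_mul_bar_scale, one_mul]

theorem dual_neg (i j : Idx m) (c : A) : D.dual i j (-c) = -D.dual i j c := by
  simp only [dual, map_neg, mul_neg, neg_mul]

theorem dual_one {i j : Idx m} (h : i.2 = j.2) : D.dual i j 1 = -1 := by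
  have hscale : D.scale i = D.scale j := by rw [scale_eq_ite, scale_eq_ite, h]
  rw [dual, D.bar_one, mul_one, hscale, bar_scale_mul_scale]

theorem dual_scale_mul (i : Idx m) {g : A} (hg : g ∈ D.Lambda) :
    D.dual i (Idx.neg i) (D.scale i * g) = D.scale i * g := by
  conv_rhs => rw [D.lambdaMax_mem g hg]
  rw [dual, bar_scale_neg, D.bar_mul, mul_assoc, mul_assoc (D.bar g), bar_scale_mul_scale, mul_one,
    mul_neg, D.lam_comm, mul_assoc, D.lam_comm]

theorem add_dual_eq_scale_mul (i : Idx m) (c : A) :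
    c + D.dual i (Idx.neg i) c =
      D.scale i * (D.bar (D.scale i) * c - D.lam * D.bar (D.bar (D.scale i) * c)) := by
  rw [dual, bar_scale_neg, D.bar_mul, D.bar_bar, mul_sub, ← mul_assoc, scale_mul_bar_scale, one_mul,
    ← sub_eq_add_neg, ← mul_assoc, ← mul_assoc, D.scale_comm i D.lam]

theorem neg_mul_scale_mul_dual (k i : Idx m) (c g : A) :
    -(c * (D.scale i * g) * D.dual k i c) = D.scale k * (c * g * D.bar c) := by
  rw [dual, mul_neg, _root_.neg_neg, D.scale_comm k, D.scale_comm i]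
  simp only [mul_assoc]
  rw [← mul_assoc (D.scale i) (D.bar _), scale_mul_bar_scale, one_mul]

end Scalars

section Parameters

variable {I J Γ Δ : AddSubgroup A} {i j : Idx m} {a b : A}

theorem pmem_iff_of_ne (h : j ≠ Idx.neg i) : D.pmem I Γ i j a ↔ a ∈ I := by
  rw [pmem, if_neg h]

theorem pmem_neg_iff : D.pmem I Γ i (Idx.neg i) a ↔ ∃ g ∈ Γ, a = D.scale i * g := by
  rw [pmem, if_pos rfl, scale]

variable {D}

theorem pmem_of_fst_ne (h : i.1 ≠ j.1) (ha : a ∈ I) : D.pmem I Γ i j a :=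
  (D.pmem_iff_of_ne fun e => (Idx.fst_ne_iff.mp h).2 (Idx.eq_neg_comm.mp e)).mpr ha

theorem pmem_neg_of_mem {g : A} (hg : g ∈ Γ) : D.pmem I Γ i (Idx.neg i) (D.scale i * g) :=
  D.pmem_neg_iff.mpr ⟨g, hg, rfl⟩

theorem pmem_neg_congr (h : i.2 = j.2) :
    D.pmem I Γ i (Idx.neg i) a ↔ D.pmem I Γ j (Idx.neg j) a := by
  rw [pmem_neg_iff, pmem_neg_iff, scale_eq_ite, scale_eq_ite, h]

theorem pmem_neg_left_congr (h : i.2 = j.2) :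
    D.pmem I Γ (Idx.neg i) i a ↔ D.pmem I Γ (Idx.neg j) j a := by
  have := pmem_neg_congr (D := D) (I := I) (Γ := Γ) (a := a) (i := Idx.neg i) (j := Idx.neg j)
    (congrArg not h)
  rwa [Idx.neg_neg, Idx.neg_neg] at this

theorem pmem.mono (hI : I ≤ J) (hΓ : Γ ≤ Δ) (ha : D.pmem I Γ i j a) : D.pmem J Δ i j a := by
  unfold pmem at ha ⊢
  split_ifs at ha ⊢
  · exact ha.imp fun g hg => ⟨hΓ hg.1, hg.2⟩
  · exact hI ha

theorem pmem.neg (ha : D.pmem I Γ i j a) : D.pmem I Γ i j (-a) := by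
  unfold pmem at ha ⊢
  split_ifs at ha ⊢
  · obtain ⟨g, hg, rfl⟩ := ha
    exact ⟨-g, neg_mem hg, (mul_neg _ _).symm⟩
  · exact neg_mem ha

theorem pmem.add (ha : D.pmem I Γ i j a) (hb : D.pmem I Γ i j b) : D.pmem I Γ i j (a + b) := by
  unfold pmem at ha hb ⊢
  split_ifs at ha hb ⊢
  · obtain ⟨g, hg, rfl⟩ := ha
    obtain ⟨h, hh, rfl⟩ := hb
    exact ⟨g + h, add_mem hg hh, (mul_add _ _ _).symm⟩
  · exact add_mem ha hb

variable (D) in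
/-- Parameters `a ∈ (A, Λ)` at position `(i, j)`, i.e. those for which `T_{ij}(a)` is an elementary
unitary transvection. -/
abbrev IsAdmissible (i j : Idx m) (a : A) : Prop := D.pmem ⊤ D.Lambda i j a

theorem isAdmissible_of_fst_ne (h : i.1 ≠ j.1) (a : A) : D.IsAdmissible i j a :=
  pmem_of_fst_ne h (AddSubgroup.mem_top a)

theorem isAdmissible_add_dual (i : Idx m) (a : A) :
    D.IsAdmissible i (Idx.neg i) (a + D.dual i (Idx.neg i) a) := by
  rw [add_dual_eq_scale_mul]
  exact pmem_neg_of_mem (D.lambdaMin_mem _)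

theorem IsAdmissible.dual_eq (ha : D.IsAdmissible i (Idx.neg i) a) :
    D.dual i (Idx.neg i) a = a := by
  obtain ⟨g, hg, rfl⟩ := D.pmem_neg_iff.mp ha
  exact D.dual_scale_mul i hg

theorem IsAdmissible.neg_mul_mul_dual (ha : D.IsAdmissible i (Idx.neg i) a) (k : Idx m) (c : A) :
    D.IsAdmissible k (Idx.neg k) (-(c * a * D.dual k i c)) := by
  obtain ⟨g, hg, rfl⟩ := D.pmem_neg_iff.mp ha
  rw [neg_mul_scale_mul_dual]
  exact pmem_neg_of_mem (D.lambda_conj c g hg)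

variable (D) in
theorem gammaMin_le_Lambda (K : AddSubgroup A) : D.gammaMin K ≤ D.Lambda := by
  rw [gammaMin, AddSubgroup.closure_le]
  rintro _ (⟨a, -, rfl⟩ | ⟨a, -, c, hc, rfl⟩)
  exacts [D.lambdaMin_mem a, D.lambda_conj a c hc]

end Parameters

end FormRingData

namespace FormIdeal

variable {A : Type*} [Ring A] {D : FormRingData A} (F : FormIdeal D) {m : ℕ} {i j : Idx m} {a : A}

open FormRingData

theorem isAdmissible (ha : D.pmem F.I F.Gamma i j a) : D.IsAdmissible i j a :=
  ha.mono le_top F.gamma_le_Lambda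

theorem mem_of_pmem (ha : D.pmem F.I F.Gamma i j a) : a ∈ F.I := by
  unfold pmem at ha
  split_ifs at ha
  · obtain ⟨g, hg, rfl⟩ := ha
    exact F.mul_mem_left _ _ (F.gamma_le_I hg)
  · exact ha

theorem pmem_dual (ha : D.pmem F.I F.Gamma i j a) :
    D.pmem F.I F.Gamma (Idx.neg j) (Idx.neg i) (D.dual i j a) := by
  by_cases h : j = Idx.neg i
  · subst h
    rw [(F.isAdmissible ha).dual_eq, Idx.neg_neg]
    exact ha
  · rw [D.pmem_iff_of_ne h] at ha
    rw [D.pmem_iff_of_ne fun e => h (by rw [e, Idx.neg_neg])]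
    exact neg_mem (F.mul_mem_right _ _ (F.mul_mem_left _ _ (F.bar_mem _ ha)))

/-- The form ring `(A, Λ)`, viewed as a form ideal of itself. -/
def top (D : FormRingData A) : FormIdeal D where
  I := ⊤
  Gamma := D.Lambda
  mul_mem_left _ _ _ := AddSubgroup.mem_top _
  mul_mem_right _ _ _ := AddSubgroup.mem_top _
  bar_mem _ _ := AddSubgroup.mem_top _
  gammaMin_le := D.gammaMin_le_Lambda ⊤
  gamma_le_I := le_top
  gamma_le_Lambda := le_rfl
  gamma_conj := D.lambda_conj

end FormIdeal

namespace FormRingData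

variable {A : Type*} [Ring A] {D : FormRingData A} {m : ℕ}

theorem IsAdmissible.dual {i j : Idx m} {a : A} (ha : D.IsAdmissible i j a) :
    D.IsAdmissible (Idx.neg j) (Idx.neg i) (D.dual i j a) :=
  (FormIdeal.top D).pmem_dual ha

section SymmetrisedProduct

variable {I J : AddSubgroup A}

theorem symI_comm (I J : AddSubgroup A) : symI I J = symI J I := sup_comm _ _

theorem symG_comm (D : FormRingData A) (I Γ J Δ : AddSubgroup A) :
    D.symG I Γ J Δ = D.symG J Δ I Γ := by
  rw [symG, symG, symI_comm, sup_right_comm]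

theorem mul_mem_symI {a b : A} (ha : a ∈ I) (hb : b ∈ J) : a * b ∈ symI I J :=
  AddSubgroup.mem_sup_left (AddSubgroup.subset_closure ⟨a, ha, b, hb, rfl⟩)

theorem conj_mem_symG {Γ Δ : AddSubgroup A} {a d : A} (ha : a ∈ I) (hd : d ∈ Δ) :
    a * d * D.bar a ∈ D.symG I Γ J Δ :=
  AddSubgroup.mem_sup_right (AddSubgroup.subset_closure ⟨a, ha, d, hd, rfl⟩)

theorem sub_mem_symG {Γ Δ : AddSubgroup A} {a : A} (ha : a ∈ symI I J) :
    a - D.lam * D.bar a ∈ D.symG I Γ J Δ :=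
  AddSubgroup.mem_sup_left
    (AddSubgroup.mem_sup_left (AddSubgroup.subset_closure (Or.inl ⟨a, ha, rfl⟩)))

theorem symG_le_Lambda (FI FJ : FormIdeal D) :
    D.symG FI.I FI.Gamma FJ.I FJ.Gamma ≤ D.Lambda := by
  have hconj {K Γ : AddSubgroup A} (hΓ : Γ ≤ D.Lambda) : D.conjPar K Γ ≤ D.Lambda := by
    rw [conjPar, AddSubgroup.closure_le]
    rintro _ ⟨b, -, g, hg, rfl⟩
    exact D.lambda_conj b g (hΓ hg)
  exact sup_le (sup_le (D.gammaMin_le_Lambda _) (hconj FI.gamma_le_Lambda))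
    (hconj FJ.gamma_le_Lambda)

variable {FI FJ : FormIdeal D} {i j k : Idx m} {a b : A}

theorem pmem_symProd_mul (hik : i.1 ≠ k.1) (ha : a ∈ FI.I) (hb : b ∈ FJ.I) :
    D.pmem (symI FI.I FJ.I) (D.symG FI.I FI.Gamma FJ.I FJ.Gamma) i k (a * b) :=
  pmem_of_fst_ne hik (mul_mem_symI ha hb)

theorem pmem_symProd_add_dual (i : Idx m) (ha : a ∈ FI.I) (hb : b ∈ FJ.I) :
    D.pmem (symI FI.I FJ.I) (D.symG FI.I FI.Gamma FJ.I FJ.Gamma) i (Idx.neg i)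
      (a * b + D.dual i (Idx.neg i) (a * b)) := by
  rw [add_dual_eq_scale_mul, ← mul_assoc]
  exact pmem_neg_of_mem (sub_mem_symG (mul_mem_symI (FI.mul_mem_left _ _ ha) hb))

theorem pmem_symProd_neg_mul_mul_dual (k : Idx m) (ha : a ∈ FI.I)
    (hb : D.pmem FJ.I FJ.Gamma i (Idx.neg i) b) :
    D.pmem (symI FI.I FJ.I) (D.symG FI.I FI.Gamma FJ.I FJ.Gamma) k (Idx.neg k)
      (-(a * b * D.dual k i a)) := by
  obtain ⟨d, hd, rfl⟩ := D.pmem_neg_iff.mp hb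
  rw [neg_mul_scale_mul_dual]
  exact pmem_neg_of_mem (conj_mem_symG ha hd)

end SymmetrisedProduct

end FormRingData

namespace FormRingData

variable {A : Type*} [Ring A] (D : FormRingData A) {m : ℕ}

open Idx (neg)

section RootMatrices

/-- The nilpotent matrix `T_{ij}(c) − e`. -/
def rootMat (i j : Idx m) (c : A) : Matrix (Idx m) (Idx m) A :=
  if j = neg i then single i j c else single i j c + single (neg j) (neg i) (D.dual i j c)

variable {D} {i j h k : Idx m} {a b c x : A}

theorem T_val (hij : i ≠ j) (c : A) : (D.T i j c).val = 1 + D.rootMat i j c := by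
  unfold T rootMat
  split_ifs with hlong
  · rw [TL, hlong]
  · rw [TS, dif_neg hij]
    change 1 + D.Xmat i j c = _
    rw [Xmat, lpow_mul_bar, dual, stdBasisMatrix_neg', sub_eq_add_neg]

theorem rootMat_neg (i : Idx m) (c : A) : D.rootMat i (neg i) c = single i (neg i) c := if_pos rfl

theorem rootMat_of_fst_ne (hij : i.1 ≠ j.1) (c : A) :
    D.rootMat i j c = single i j c + single (neg j) (neg i) (D.dual i j c) :=
  if_neg fun h : j = neg i => hij (h ▸ rfl)

theorem rootMat_add (i j : Idx m) (a b : A) :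
    D.rootMat i j (a + b) = D.rootMat i j a + D.rootMat i j b := by
  unfold rootMat
  split_ifs
  · exact single_add i j a b
  · have hdual : D.dual i j (a + b) = D.dual i j a + D.dual i j b := by
      simp only [dual, map_add, mul_add, add_mul, neg_add]
    rw [single_add, hdual, single_add, add_add_add_comm]

theorem rootMat_dual (hc : D.IsAdmissible i j c) :
    D.rootMat (neg j) (neg i) (D.dual i j c) = D.rootMat i j c := by
  by_cases hij : j = neg i
  · subst hij
    rw [hc.dual_eq, Idx.neg_neg]
  · have hji : neg i ≠ neg (neg j) := fun h => hij (by rw [h, Idx.neg_neg])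
    rw [rootMat, rootMat, if_neg hij, if_neg hji, dual_dual, Idx.neg_neg, Idx.neg_neg, add_comm]

theorem rootMat_mul_rootMat_eq_zero (h₁ : h ≠ j) (h₂ : h ≠ neg i) (h₃ : k ≠ i) (h₄ : k ≠ neg j)
    (a b : A) : D.rootMat i j a * D.rootMat h k b = 0 := by
  have h₅ : j ≠ neg k := fun e => h₄ (Idx.eq_neg_comm.mp e)
  have h₆ : neg i ≠ neg k := fun e => h₃ (Idx.neg_injective e).symm
  unfold rootMat
  split_ifs <;> simp [add_mul, mul_add, h₁.symm, h₂.symm, h₅, h₆]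

theorem rootMat_mul_self (hij : i ≠ j) (a b : A) : D.rootMat i j a * D.rootMat i j b = 0 :=
  rootMat_mul_rootMat_eq_zero hij (Idx.neg_ne i).symm hij.symm (Idx.neg_ne j).symm a b

theorem rootMat_mul_rootMat_of_adjacent (hij : i.1 ≠ j.1) (hjk : j.1 ≠ k.1) (hik : i ≠ k)
    (a b : A) : D.rootMat i j a * D.rootMat j k b = single i k (a * b) := by
  have h₁ : neg i ≠ j := ne_of_apply_ne Prod.fst hij
  have h₂ : j ≠ neg k := ne_of_apply_ne Prod.fst hjk
  have h₃ : neg i ≠ neg k := fun e => hik (Idx.neg_injective e)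
  simp [rootMat_of_fst_ne hij, rootMat_of_fst_ne hjk, add_mul, mul_add, h₁, h₂, h₃]

theorem rootMat_mul_rootMat_of_adjacent_swap (hij : i.1 ≠ j.1) (hjk : j.1 ≠ k.1) (hik : i ≠ k)
    (a b : A) :
    D.rootMat j k b * D.rootMat i j a = -single (neg k) (neg i) (D.dual i k (a * b)) := by
  have h₁ : k ≠ neg j := ne_of_apply_ne Prod.fst hjk.symm
  have h₂ : neg j ≠ i := ne_of_apply_ne Prod.fst hij.symm
  rw [← stdBasisMatrix_neg', ← dual_mul_dual D i j k]
  simp [rootMat_of_fst_ne hij, rootMat_of_fst_ne hjk, add_mul, mul_add, h₁, h₂, hik.symm]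

theorem rootMat_mul_rootMat_neg (hki : k.1 ≠ i.1) (c x : A) :
    D.rootMat k i c * D.rootMat i (neg i) x = single k (neg i) (c * x) := by
  have h₁ : neg k ≠ i := ne_of_apply_ne Prod.fst hki
  simp [rootMat_of_fst_ne hki, rootMat_neg, add_mul, h₁]

theorem rootMat_neg_mul_rootMat (hki : k.1 ≠ i.1) (c x : A) :
    D.rootMat i (neg i) x * D.rootMat k i c = single i (neg k) (x * D.dual k i c) := by
  have h₁ : neg i ≠ k := ne_of_apply_ne Prod.fst hki.symm
  simp [rootMat_of_fst_ne hki, rootMat_neg, mul_add, h₁]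

theorem one_add_rootMat_mul_of_adjacent (hij : i.1 ≠ j.1) (hjk : j.1 ≠ k.1) (hik : i ≠ k)
    (a b : A) :
    (1 + D.rootMat i j a) * (1 + D.rootMat j k b) =
      (1 + (single i k (a * b) + single (neg k) (neg i) (D.dual i k (a * b)))) *
        (1 + D.rootMat j k b) * (1 + D.rootMat i j a) := by
  have hXY := rootMat_mul_rootMat_of_adjacent (D := D) hij hjk hik a b
  have hXYX : D.rootMat i j a * D.rootMat j k b * D.rootMat i j a = 0 := by
    have hki : k ≠ neg j := ne_of_apply_ne Prod.fst hjk.symm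
    rw [hXY]
    simp [rootMat_of_fst_ne hij, mul_add, hik.symm, hki]
  have hYXY : D.rootMat j k b * (D.rootMat i j a * D.rootMat j k b) = 0 := by
    have hji : neg j ≠ i := ne_of_apply_ne Prod.fst hij.symm
    rw [hXY]
    simp [rootMat_of_fst_ne hjk, add_mul, hik.symm, hji]
  rw [one_add_mul_one_add_of_mul_self_eq_zero (rootMat_mul_self (Idx.fst_ne_iff.mp hij).1 a a)
    (rootMat_mul_self (Idx.fst_ne_iff.mp hjk).1 b b) hYXY, hXYX, sub_zero, mul_one, hXY,
    rootMat_mul_rootMat_of_adjacent_swap hij hjk hik, sub_neg_eq_add]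

theorem one_add_rootMat_mul_neg (hki : k.1 ≠ i.1) (hx : D.IsAdmissible i (neg i) x) (c : A) :
    (1 + D.rootMat k i c) * (1 + D.rootMat i (neg i) x) =
      (1 + D.rootMat k (neg i) (c * x)) * (1 + D.rootMat k (neg k) (-(c * x * D.dual k i c))) *
        (1 + D.rootMat i (neg i) x) * (1 + D.rootMat k i c) := by
  have hXY := rootMat_mul_rootMat_neg (D := D) hki c x
  have hYX := rootMat_neg_mul_rootMat (D := D) hki c x
  have hYXY : D.rootMat i (neg i) x * (D.rootMat k i c * D.rootMat i (neg i) x) = 0 := by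
    have hik : neg i ≠ k := ne_of_apply_ne Prod.fst hki.symm
    rw [hXY, rootMat_neg]
    simp [hik]
  have hXYX : D.rootMat k i c * D.rootMat i (neg i) x * D.rootMat k i c =
      single k (neg k) (c * x * D.dual k i c) := by
    have hik : neg i ≠ k := ne_of_apply_ne Prod.fst hki.symm
    rw [hXY]
    simp [rootMat_of_fst_ne hki, mul_add, hik]
  have hcomm : D.rootMat k i c * D.rootMat i (neg i) x - D.rootMat i (neg i) x * D.rootMat k i c =
      D.rootMat k (neg i) (c * x) := by
    have hdual : D.dual k (neg i) (c * x) = -(x * D.dual k i c) := by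
      rw [← _root_.neg_neg (D.dual k (neg i) (c * x)), ← dual_mul_dual D k i, hx.dual_eq]
    have hki' : k.1 ≠ (neg i).1 := hki
    rw [hXY, hYX, rootMat_of_fst_ne hki', hdual, Idx.neg_neg, stdBasisMatrix_neg', sub_eq_add_neg]
  rw [one_add_mul_one_add_of_mul_self_eq_zero (rootMat_mul_self (Idx.fst_ne_iff.mp hki).1 c c)
    (rootMat_mul_self (Idx.neg_ne i).symm x x) hYXY, hcomm, hXYX, rootMat_neg k,
    stdBasisMatrix_neg', ← sub_eq_add_neg]

end RootMatrices

/-- A family of elements of a group `Q`, indexed by positions and parameters, that satisfies the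
unitary Steinberg relations. The relations are imposed at admissible parameters only; short and long
root elements are treated on the same footing. -/
structure SteinbergSystem (m : ℕ) (Q : Type*) [Group Q] where
  T : Idx m → Idx m → A → Q
  T_dual : ∀ {i j : Idx m} {c : A}, i ≠ j → D.IsAdmissible i j c →
    T (neg j) (neg i) (D.dual i j c) = T i j c
  T_add : ∀ {i j : Idx m} {a b : A}, i ≠ j → D.IsAdmissible i j a → D.IsAdmissible i j b →
    T i j (a + b) = T i j a * T i j b
  T_commute : ∀ {i j h k : Idx m} {a b : A}, i ≠ j → h ≠ k →
    h ≠ j → h ≠ neg i → k ≠ i → k ≠ neg j →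
    D.IsAdmissible i j a → D.IsAdmissible h k b → Commute (T i j a) (T h k b)
  T_mul_short : ∀ {i j k : Idx m} (a b : A), i.1 ≠ j.1 → j.1 ≠ k.1 → i.1 ≠ k.1 →
    T i j a * T j k b = T i k (a * b) * T j k b * T i j a
  T_mul_long : ∀ {i j : Idx m} (a b : A), i.1 ≠ j.1 →
    T i j a * T j (neg i) b =
      T i (neg i) (a * b + D.dual i (neg i) (a * b)) * T j (neg i) b * T i j a
  T_mul_short_long : ∀ {k i : Idx m} {x : A} (c : A), k.1 ≠ i.1 → D.IsAdmissible i (neg i) x →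
    T k i c * T i (neg i) x =
      T k (neg i) (c * x) * T k (neg k) (-(c * x * D.dual k i c)) * T i (neg i) x * T k i c

/-- The elementary unitary transvections themselves, as a Steinberg system in `GL(2m, A)`. -/
def transvectionSystem (m : ℕ) : D.SteinbergSystem m (GLn A m) where
  T := D.T
  T_dual {i j c} hij hc := Units.ext <| by
    rw [T_val hij, T_val fun h => hij (Idx.neg_injective h).symm, rootMat_dual hc]
  T_add {i j a b} hij _ _ := Units.ext <| by
    simp only [Units.val_mul, T_val hij, rootMat_add, mul_add, add_mul, mul_one, one_mul,
      rootMat_mul_self hij, add_zero, add_assoc]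
  T_commute {i j h k a b} hij hhk h₁ h₂ h₃ h₄ _ _ := Units.ext <| by
    have h₅ : j ≠ neg k := fun e => h₄ (Idx.eq_neg_comm.mp e)
    have h₆ : i ≠ neg h := fun e => h₂ (Idx.eq_neg_comm.mp e)
    simp only [Units.val_mul, T_val hij, T_val hhk, mul_add, add_mul, mul_one, one_mul,
      rootMat_mul_rootMat_eq_zero h₁ h₂ h₃ h₄,
      rootMat_mul_rootMat_eq_zero h₃.symm h₆ h₁.symm h₅, add_zero]
    abel
  T_mul_short {i j k} a b hij hjk hik := Units.ext <| by
    have hne : i ≠ k := ne_of_apply_ne Prod.fst hik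
    simp only [Units.val_mul, T_val (Idx.fst_ne_iff.mp hij).1, T_val (Idx.fst_ne_iff.mp hjk).1,
      T_val hne, rootMat_of_fst_ne hik]
    exact one_add_rootMat_mul_of_adjacent hij hjk hne a b
  T_mul_long {i j} a b hij := Units.ext <| by
    have hne : i ≠ neg i := (Idx.neg_ne i).symm
    have hji : j ≠ neg i := ne_of_apply_ne Prod.fst hij.symm
    simp only [Units.val_mul, T_val (Idx.fst_ne_iff.mp hij).1, T_val hji, T_val hne, rootMat_neg,
      single_add]
    have := one_add_rootMat_mul_of_adjacent (D := D) (k := neg i) hij hij.symm hne a b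
    rwa [Idx.neg_neg] at this
  T_mul_short_long {k i x} c hki hx := Units.ext <| by
    have hne (l : Idx m) : l ≠ neg l := (Idx.neg_ne l).symm
    have hik : k ≠ neg i := ne_of_apply_ne Prod.fst hki
    simp only [Units.val_mul, T_val (Idx.fst_ne_iff.mp hki).1, T_val hik, T_val (hne _)]
    exact one_add_rootMat_mul_neg hki hx c

end FormRingData

namespace FormRingData.SteinbergSystem

variable {A : Type*} [Ring A] {D : FormRingData A} {m : ℕ} {Q : Type*} [Group Q]

open Idx (neg)

section Constructions

variable (E : D.SteinbergSystem m Q)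

/-- The subgroup generated by the elements of a Steinberg system of level `F`; for the
transvections themselves this is `FU(2m, I, Γ)`. -/
def FU (F : FormIdeal D) : Subgroup Q :=
  Subgroup.closure {x | ∃ i j a, i ≠ j ∧ D.pmem F.I F.Gamma i j a ∧ x = E.T i j a}

/-- The commutators `Y_{ij}(a,b) = [T_{ij}(a), T_{ji}(b)]` with `a` of level `FI` and `b` of level
`FJ` whose positions avoid the indices `±p`. -/
def oppositeCommutators (FI FJ : FormIdeal D) (p : Fin m) : Set Q :=
  {x | ∃ i j a b, i ≠ j ∧ i.1 ≠ p ∧ j.1 ≠ p ∧ D.pmem FI.I FI.Gamma i j a ∧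
    D.pmem FJ.I FJ.Gamma j i b ∧ x = ⁅E.T i j a, E.T j i b⁆}

/-- The image of a Steinberg system under a group homomorphism. -/
def map {Q' : Type*} [Group Q'] (f : Q →* Q') : D.SteinbergSystem m Q' where
  T i j a := f (E.T i j a)
  T_dual hij hc := congrArg f (E.T_dual hij hc)
  T_add hij ha hb := by rw [E.T_add hij ha hb, map_mul]
  T_commute hij hhk h₁ h₂ h₃ h₄ ha hb := (E.T_commute hij hhk h₁ h₂ h₃ h₄ ha hb).map f
  T_mul_short a b hij hjk hik := by simp only [← map_mul, E.T_mul_short a b hij hjk hik]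
  T_mul_long a b hij := by simp only [← map_mul, E.T_mul_long a b hij]
  T_mul_short_long c hki hx := by simp only [← map_mul, E.T_mul_short_long c hki hx]

theorem T_mem_FU (F : FormIdeal D) {i j : Idx m} {a : A} (hij : i ≠ j)
    (ha : D.pmem F.I F.Gamma i j a) : E.T i j a ∈ E.FU F :=
  Subgroup.subset_closure ⟨i, j, a, hij, ha, rfl⟩

theorem FU_map {Q' : Type*} [Group Q'] (f : Q →* Q') (F : FormIdeal D) :
    (E.map f).FU F = (E.FU F).map f := by
  rw [FU, FU, MonoidHom.map_closure]
  congr 1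
  ext x
  simp only [map, Set.mem_image, Set.mem_ofPred_eq]
  grind

theorem oppositeCommutators_map {Q' : Type*} [Group Q'] (f : Q →* Q') (FI FJ : FormIdeal D)
    (p : Fin m) : (E.map f).oppositeCommutators FI FJ p = f '' E.oppositeCommutators FI FJ p := by
  ext x
  simp only [oppositeCommutators, map, ← map_commutatorElement, Set.mem_image, Set.mem_ofPred_eq]
  grind

open Classical in
/-- The elements of a Steinberg system, regarded as elements of the subgroup generated by the
admissible ones; the junk value at inadmissible parameters is `1`. -/
noncomputable def restrictT (i j : Idx m) (a : A) : E.FU (FormIdeal.top D) :=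
  if h : i ≠ j ∧ D.IsAdmissible i j a then ⟨E.T i j a, E.T_mem_FU _ h.1 h.2⟩ else 1

variable {E} in
theorem coe_restrictT {i j : Idx m} {a : A} (hij : i ≠ j) (ha : D.IsAdmissible i j a) :
    (E.restrictT i j a : Q) = E.T i j a := by
  rw [restrictT, dif_pos ⟨hij, ha⟩]

/-- A Steinberg system, viewed inside the subgroup generated by its admissible elements. -/
noncomputable def restrict : D.SteinbergSystem m (E.FU (FormIdeal.top D)) where
  T := E.restrictT
  T_dual hij hc := Subtype.ext <| by
    rw [coe_restrictT hij hc, coe_restrictT (fun h => hij (Idx.neg_injective h).symm) hc.dual,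
      E.T_dual hij hc]
  T_add hij ha hb := Subtype.ext <| by
    rw [Subgroup.coe_mul, coe_restrictT hij ha, coe_restrictT hij hb, coe_restrictT hij (ha.add hb),
      E.T_add hij ha hb]
  T_commute hij hhk h₁ h₂ h₃ h₄ ha hb := Subtype.ext <| by
    rw [Subgroup.coe_mul, Subgroup.coe_mul, coe_restrictT hij ha, coe_restrictT hhk hb,
      (E.T_commute hij hhk h₁ h₂ h₃ h₄ ha hb).eq]
  T_mul_short {i j k} a b hij hjk hik := Subtype.ext <| by
    have hcoe {l l' : Idx m} (h : l.1 ≠ l'.1) (c : A) : (E.restrictT l l' c : Q) = E.T l l' c :=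
      coe_restrictT (Idx.fst_ne_iff.mp h).1 (isAdmissible_of_fst_ne h c)
    simp only [Subgroup.coe_mul, hcoe hij, hcoe hjk, hcoe hik, E.T_mul_short a b hij hjk hik]
  T_mul_long {i j} a b hij := Subtype.ext <| by
    have hji : j.1 ≠ (neg i).1 := hij.symm
    have hcoe {l l' : Idx m} (h : l.1 ≠ l'.1) (c : A) : (E.restrictT l l' c : Q) = E.T l l' c :=
      coe_restrictT (Idx.fst_ne_iff.mp h).1 (isAdmissible_of_fst_ne h c)
    simp only [Subgroup.coe_mul, hcoe hij, hcoe hji,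
      coe_restrictT (Idx.neg_ne i).symm (isAdmissible_add_dual i (a * b)), E.T_mul_long a b hij]
  T_mul_short_long {k i x} c hki hx := Subtype.ext <| by
    have hki' : k.1 ≠ (neg i).1 := hki
    have hcoe {l l' : Idx m} (h : l.1 ≠ l'.1) (c : A) : (E.restrictT l l' c : Q) = E.T l l' c :=
      coe_restrictT (Idx.fst_ne_iff.mp h).1 (isAdmissible_of_fst_ne h c)
    simp only [Subgroup.coe_mul, hcoe hki, hcoe hki', coe_restrictT (Idx.neg_ne i).symm hx,
      coe_restrictT (Idx.neg_ne k).symm (hx.neg_mul_mul_dual k c), E.T_mul_short_long c hki hx]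

theorem map_subtype_FU_restrict (F : FormIdeal D) :
    (E.restrict.FU F).map (E.FU (FormIdeal.top D)).subtype = E.FU F := by
  refine (MonoidHom.map_closure _ _).trans (congrArg Subgroup.closure ?_)
  ext x
  simp only [restrict, Set.mem_image, Set.mem_ofPred_eq]
  constructor
  · rintro ⟨_, ⟨i, j, a, hij, ha, rfl⟩, rfl⟩
    exact ⟨i, j, a, hij, ha, coe_restrictT hij (F.isAdmissible ha)⟩
  · rintro ⟨i, j, a, hij, ha, rfl⟩
    exact ⟨_, ⟨i, j, a, hij, ha, rfl⟩, coe_restrictT hij (F.isAdmissible ha)⟩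

theorem FU_restrict_top : E.restrict.FU (FormIdeal.top D) = ⊤ := by
  apply Subgroup.map_injective (Subgroup.subtype_injective _)
  rw [map_subtype_FU_restrict, ← MonoidHom.range_eq_map, Subgroup.range_subtype]

theorem coe_mem_oppositeCommutators {FI FJ : FormIdeal D} {p : Fin m}
    {x : E.FU (FormIdeal.top D)} (hx : x ∈ E.restrict.oppositeCommutators FI FJ p) :
    (x : Q) ∈ E.oppositeCommutators FI FJ p := by
  obtain ⟨i, j, a, b, hij, hi, hj, ha, hb, rfl⟩ := hx
  refine ⟨i, j, a, b, hij, hi, hj, ha, hb, ?_⟩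
  exact (map_commutatorElement (E.FU (FormIdeal.top D)).subtype _ _).trans <|
    congrArg₂ _ (coe_restrictT hij (FI.isAdmissible ha))
      (coe_restrictT hij.symm (FJ.isAdmissible hb))

end Constructions

section Center

variable (E : D.SteinbergSystem m Q)

theorem T_neg {i j : Idx m} {a : A} (hij : i ≠ j) (ha : D.IsAdmissible i j a) :
    E.T i j (-a) = (E.T i j a)⁻¹ := by
  have h0 : D.IsAdmissible i j 0 := by simpa only [add_neg_cancel] using ha.add ha.neg
  have hzero : E.T i j 0 = 1 := by simpa only [add_zero, left_eq_mul] using E.T_add hij h0 h0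
  rw [eq_inv_iff_mul_eq_one, ← E.T_add hij ha.neg ha, neg_add_cancel, hzero]

variable {E} {z : Q}

theorem commute_T_of_commute_through {i j k : Idx m} (c : A) (hij : i.1 ≠ j.1) (hjk : j.1 ≠ k.1)
    (hik : i.1 ≠ k.1) (h₁ : Commute z (E.T i j c)) (h₂ : Commute z (E.T j k 1)) :
    Commute z (E.T i k c) := by
  have hT : E.T i k c = ⁅E.T i j c, E.T j k 1⁆ := by
    rw [commutatorElement_def, E.T_mul_short c 1 hij hjk hik, mul_one]
    group
  rw [hT]
  exact commute_commutatorElement h₁ h₂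

theorem T_one_mul_long {k i : Idx m} {x : A} (hki : k.1 ≠ i.1) (hs : k.2 = i.2)
    (hx : D.IsAdmissible i (neg i) x) :
    E.T k i 1 * E.T i (neg i) x =
      E.T k (neg i) x * E.T k (neg k) x * E.T i (neg i) x * E.T k i 1 := by
  have hrel := E.T_mul_short_long 1 hki hx
  rwa [one_mul, dual_one D hs, mul_neg_one, _root_.neg_neg] at hrel

theorem T_one_mul_opposite_long {k i : Idx m} {y : A} (hki : k.1 ≠ i.1) (hs : k.2 = i.2)
    (hy : D.IsAdmissible (neg k) k y) :
    E.T k i 1 * E.T (neg k) k y =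
      E.T (neg i) k (-y) * E.T (neg i) i y * E.T (neg k) k y * E.T k i 1 := by
  have hik : (neg i).1 ≠ (neg k).1 := hki.symm
  have hs' : (neg i).2 = (neg k).2 := congrArg not hs.symm
  have hdual := E.T_dual (Idx.fst_ne_iff.mp hki).1 (isAdmissible_of_fst_ne hki 1)
  rw [dual_one D hs] at hdual
  have hrel := E.T_mul_short_long (x := y) (-1) hik (by rwa [Idx.neg_neg])
  rwa [Idx.neg_neg, Idx.neg_neg, hdual, neg_one_mul, dual_neg, dual_one D hs', _root_.neg_neg,
    mul_one, _root_.neg_neg] at hrel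

theorem commute_T_neg_of_commute_through {i k : Idx m} {c : A} (hik : i.1 ≠ k.1) (hs : i.2 = k.2)
    (hc : D.IsAdmissible k (neg k) c) (h₁ : Commute z (E.T i k 1))
    (h₂ : Commute z (E.T k (neg k) c)) (h₃ : Commute z (E.T i (neg k) c)) :
    Commute z (E.T i (neg i) c) := by
  have hT : E.T i (neg i) c = (E.T i (neg k) c)⁻¹ * ⁅E.T i k 1, E.T k (neg k) c⁆ := by
    rw [commutatorElement_def, T_one_mul_long hik hs hc]
    group
  rw [hT]
  exact h₃.inv_right.mul_right (commute_commutatorElement h₁ h₂)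

theorem mem_center_of_commute_T (htop : E.FU (FormIdeal.top D) = ⊤)
    (h : ∀ k l : Idx m, ∀ c : A, k ≠ l → D.IsAdmissible k l c → Commute z (E.T k l c)) :
    z ∈ Subgroup.center Q := by
  have hle : E.FU (FormIdeal.top D) ≤ Subgroup.centralizer {z} := by
    rw [FU, Subgroup.closure_le]
    rintro _ ⟨k, l, c, hkl, hc, rfl⟩
    exact Subgroup.mem_centralizer_singleton_iff.mpr (h k l c hkl hc).eq.symm
  rw [htop] at hle
  exact Subgroup.mem_center_iff.mpr fun g =>
    Subgroup.mem_centralizer_singleton_iff.mp (hle (Subgroup.mem_top g))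

theorem mem_center_of_commute (hm : 3 ≤ m) (htop : E.FU (FormIdeal.top D) = ⊤) (p q : Fin m)
    (h : ∀ k l : Idx m, ∀ c : A, k ≠ l → k.1 ≠ p → k.1 ≠ q → D.IsAdmissible k l c →
      Commute z (E.T k l c)) : z ∈ Subgroup.center Q := by
  have hout (k l : Idx m) (c : A) (hkl : k ≠ l) (hl : l.1 ≠ p) (hl' : l.1 ≠ q)
      (hc : D.IsAdmissible k l c) : Commute z (E.T k l c) := by
    rw [← E.T_dual hkl hc]
    exact h _ _ _ (fun e => hkl (Idx.neg_injective e).symm) hl hl' hc.dual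
  have hall (k l : Idx m) (c : A) (hkl : k ≠ l) (hc : D.IsAdmissible k l c) :
      Commute z (E.T k l c) := by
    obtain ⟨r, hrp, hrq⟩ := exists_ne_ne hm p q
    by_cases hk : k.1 ≠ p ∧ k.1 ≠ q
    · exact h k l c hkl hk.1 hk.2 hc
    by_cases hl : l.1 ≠ p ∧ l.1 ≠ q
    · exact hout k l c hkl hl.1 hl.2 hc
    let t : Idx m := (r, k.2)
    have hkt : k.1 ≠ t.1 := by grind
    have htl : t.1 ≠ l.1 := by grind
    have hkt' (a : A) : Commute z (E.T k t a) :=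
      hout k t a (ne_of_apply_ne Prod.fst hkt) hrp hrq (isAdmissible_of_fst_ne hkt a)
    by_cases hlk : k.1 = l.1
    · obtain rfl : l = neg k :=
        Idx.eq_neg_comm.mp ((Idx.eq_or_eq_neg_of_fst_eq hlk).resolve_left hkl)
      have hc' : D.IsAdmissible t (neg t) c := (pmem_neg_congr (i := k) (j := t) rfl).mp hc
      exact commute_T_neg_of_commute_through hkt rfl hc' (hkt' 1)
        (h t _ c (Idx.neg_ne t).symm hrp hrq hc')
        (hout k _ c (ne_of_apply_ne Prod.fst hkt) hrp hrq
          (isAdmissible_of_fst_ne (j := neg t) hkt c))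
    · exact commute_T_of_commute_through c hkt htl hlk (hkt' c)
        (h t l 1 (ne_of_apply_ne Prod.fst htl) hrp hrq (isAdmissible_of_fst_ne htl 1))
  exact mem_center_of_commute_T htop hall

end Center

/-- The elements of a Steinberg system whose level is the symmetrised product of `FI` and `FJ` are
trivial. -/
def KillsProduct (E : D.SteinbergSystem m Q) (FI FJ : FormIdeal D) : Prop :=
  ∀ ⦃i j : Idx m⦄ ⦃a : A⦄, i ≠ j →
    D.pmem (symI FI.I FJ.I) (D.symG FI.I FI.Gamma FJ.I FJ.Gamma) i j a → E.T i j a = 1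

section KillsProduct

variable {E : D.SteinbergSystem m Q} {FI FJ : FormIdeal D} {i j k h : Idx m} {a b c x y : A}

theorem KillsProduct.symm (hE : E.KillsProduct FI FJ) : E.KillsProduct FJ FI := fun i j a hij ha =>
  hE hij (by rwa [symI_comm, symG_comm])

theorem commute_short_long (hE : E.KillsProduct FI FJ) (hki : k.1 ≠ i.1) (hc : c ∈ FI.I)
    (hx : D.pmem FJ.I FJ.Gamma i (neg i) x) : Commute (E.T k i c) (E.T i (neg i) x) := by
  have hki' : k.1 ≠ (neg i).1 := hki
  have hrel := E.T_mul_short_long c hki (FJ.isAdmissible hx)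
  rwa [hE (ne_of_apply_ne Prod.fst hki') (pmem_symProd_mul hki' hc (FJ.mem_of_pmem hx)),
    hE (Idx.neg_ne k).symm (pmem_symProd_neg_mul_mul_dual k hc hx), one_mul, one_mul] at hrel

theorem commute_of_adjacent (hE : E.KillsProduct FI FJ) (hij : i ≠ j) (hjk : j ≠ k) (hik : i ≠ k)
    (ha : D.pmem FI.I FI.Gamma i j a) (hb : D.pmem FJ.I FJ.Gamma j k b) :
    Commute (E.T i j a) (E.T j k b) := by
  have haI := FI.mem_of_pmem ha
  have hbJ := FJ.mem_of_pmem hb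
  by_cases hij' : i = neg j
  · subst hij'
    have hkj : (neg k).1 ≠ (neg j).1 := Idx.fst_ne_iff.mpr
      ⟨fun e => hjk (Idx.neg_injective e).symm, fun e => hik (Idx.neg_injective e).symm⟩
    rw [← E.T_dual hjk (FJ.isAdmissible hb)]
    have := commute_short_long hE.symm (x := a) hkj (FJ.mem_of_pmem (FJ.pmem_dual hb))
      (by rwa [Idx.neg_neg])
    rw [Idx.neg_neg] at this
    exact this.symm
  have hij₁ : i.1 ≠ j.1 := Idx.fst_ne_iff.mpr ⟨hij, hij'⟩
  by_cases hjk' : k = neg j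
  · subst hjk'
    exact commute_short_long hE hij₁ haI hb
  have hjk₁ : j.1 ≠ k.1 := Idx.fst_ne_iff.mpr ⟨hjk, fun e => hjk' (Idx.eq_neg_comm.mp e)⟩
  by_cases hik' : k = neg i
  · subst hik'
    have hrel := E.T_mul_long a b hij₁
    rwa [hE hik (pmem_symProd_add_dual i haI hbJ), one_mul] at hrel
  have hik₁ : i.1 ≠ k.1 := Idx.fst_ne_iff.mpr ⟨hik, fun e => hik' (Idx.eq_neg_comm.mp e)⟩
  have hrel := E.T_mul_short a b hij₁ hjk₁ hik₁
  rwa [hE hik (pmem_symProd_mul hik₁ haI hbJ), one_mul] at hrel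

theorem commute_of_not_opposite (hE : E.KillsProduct FI FJ) (hij : i ≠ j) (hhk : h ≠ k)
    (hopp : h = j → k ≠ i) (hopp' : h = neg i → k ≠ neg j)
    (ha : D.pmem FI.I FI.Gamma i j a) (hb : D.pmem FJ.I FJ.Gamma h k b) :
    Commute (E.T i j a) (E.T h k b) := by
  by_cases hj : h = j
  · subst hj
    exact commute_of_adjacent hE hij hhk (hopp rfl).symm ha hb
  by_cases hk : k = neg j
  · subst hk
    rw [← E.T_dual hhk (FJ.isAdmissible hb)]
    have hb' := FJ.pmem_dual hb
    rw [Idx.neg_neg] at hb' ⊢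
    exact commute_of_adjacent hE hij (fun e => hhk (Idx.eq_neg_comm.mp e))
      (fun e => hopp' (Idx.eq_neg_comm.mp e) rfl) ha hb'
  by_cases hi : h = neg i
  · subst hi
    rw [← E.T_dual hij (FI.isAdmissible ha)]
    exact commute_of_adjacent hE (fun e => hij (Idx.neg_injective e).symm) hhk (Ne.symm hk)
      (FI.pmem_dual ha) hb
  by_cases hki : k = i
  · subst hki
    exact (commute_of_adjacent hE.symm hhk hij hj hb ha).symm
  exact E.T_commute hij hhk hj hi hki hk (FI.isAdmissible ha) (FJ.isAdmissible hb)

theorem commute_of_snd_eq (hij : i ≠ j) (hkj : k ≠ j) (hki : k ≠ neg i) (ha : D.IsAdmissible i j a)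
    (hb : D.IsAdmissible k j b) : Commute (E.T i j a) (E.T k j b) :=
  E.T_commute hij hkj hkj hki hij.symm (Idx.neg_ne j).symm ha hb

theorem commute_of_fst_eq (hij : i ≠ j) (hik : i ≠ k) (hkj : k ≠ neg j) (ha : D.IsAdmissible i j a)
    (hb : D.IsAdmissible i k b) : Commute (E.T i j a) (E.T i k b) :=
  E.T_commute hij hik hij (Idx.neg_ne i).symm hik.symm hkj ha hb

theorem commute_of_disjoint (hij : i ≠ j) (hhk : h ≠ k) (hi : i.1 ≠ h.1 ∧ i.1 ≠ k.1)
    (hj : j.1 ≠ h.1 ∧ j.1 ≠ k.1) (ha : D.IsAdmissible i j a) (hb : D.IsAdmissible h k b) :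
    Commute (E.T i j a) (E.T h k b) :=
  E.T_commute hij hhk (ne_of_apply_ne Prod.fst hj.1.symm) (ne_of_apply_ne Prod.fst hi.1.symm)
    (ne_of_apply_ne Prod.fst hi.2.symm) (ne_of_apply_ne Prod.fst hj.2.symm) ha hb

theorem commutatorElement_T_dual (hij : i ≠ j) (ha : D.pmem FI.I FI.Gamma i j a)
    (hb : D.pmem FJ.I FJ.Gamma j i b) :
    ⁅E.T (neg j) (neg i) (D.dual i j a), E.T (neg i) (neg j) (D.dual j i b)⁆ =
      ⁅E.T i j a, E.T j i b⁆ := by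
  rw [E.T_dual hij (FI.isAdmissible ha), E.T_dual hij.symm (FJ.isAdmissible hb)]

theorem commute_T_left_commutatorElement (hE : E.KillsProduct FI FJ) (hij : i ≠ j)
    (hki : k.1 ≠ i.1) (hkj : k.1 ≠ j.1) (c : A) (ha : D.pmem FI.I FI.Gamma i j a)
    (hb : D.pmem FJ.I FJ.Gamma j i b) : Commute (E.T k i c) ⁅E.T i j a, E.T j i b⁆ := by
  have ha' := FI.isAdmissible ha
  have hb' := FJ.isAdmissible hb
  have hc : D.IsAdmissible k i c := isAdmissible_of_fst_ne hki c
  have hca : D.pmem FI.I FI.Gamma k j (c * a) :=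
    pmem_of_fst_ne hkj (FI.mul_mem_left c a (FI.mem_of_pmem ha))
  obtain ⟨hki₁, hki₂⟩ := Idx.fst_ne_iff.mp hki
  obtain ⟨hkj₁, hkj₂⟩ := Idx.fst_ne_iff.mp hkj
  have hik : i ≠ neg k := fun e => hki₂ (Idx.eq_neg_comm.mp e)
  have hjk : j ≠ neg k := fun e => hkj₂ (Idx.eq_neg_comm.mp e)
  have hy : Commute (E.T k i c) (E.T j i b) := commute_of_snd_eq hki₁ hij.symm hjk hc hb'
  have hx₁ : Commute (E.T k j (c * a)) (E.T i j a) :=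
    commute_of_snd_eq hkj₁ hij hik (FI.isAdmissible hca) ha'
  have hy₁ : Commute (E.T k j (c * a)) (E.T j i b) :=
    commute_of_adjacent hE hkj₁ hij.symm hki₁ hca hb
  by_cases hij' : j = neg i
  · subst hij'
    have hw := ha'.neg_mul_mul_dual k c
    have hkk : k ≠ neg k := (Idx.neg_ne k).symm
    have hx₂ := E.T_commute hkk hij hik hik hkj₁.symm (fun e => hik (Idx.neg_injective e)) hw ha'
    have hy₂ := E.T_commute hkk hij.symm hjk hjk hki₁.symm (by rwa [Idx.neg_neg, ne_comm]) hw hb'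
    exact commute_commutatorElement_of_mul_eq hy (E.T_mul_short_long c hki ha')
      (hx₁.mul_left hx₂) (hy₁.mul_left hy₂)
  · have hij₁ : i.1 ≠ j.1 := Idx.fst_ne_iff.mpr ⟨hij, fun e => hij' (Idx.eq_neg_comm.mp e)⟩
    exact commute_commutatorElement_of_mul_eq hy (E.T_mul_short c a hki hij₁ hkj) hx₁ hy₁

theorem commute_T_right_commutatorElement (hE : E.KillsProduct FI FJ) (hij : i ≠ j)
    (hki : k.1 ≠ i.1) (hkj : k.1 ≠ j.1) (c : A) (ha : D.pmem FI.I FI.Gamma i j a)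
    (hb : D.pmem FJ.I FJ.Gamma j i b) : Commute (E.T k j c) ⁅E.T i j a, E.T j i b⁆ := by
  rw [← commutatorElement_inv]
  exact (commute_T_left_commutatorElement hE.symm hij.symm hkj hki c hb ha).inv_right

theorem commute_T_commutatorElement (hE : E.KillsProduct FI FJ) (hij : i ≠ j)
    (hki : k.1 ≠ i.1) (hkj : k.1 ≠ j.1) (hkh : k ≠ h) (hc : D.IsAdmissible k h c)
    (ha : D.pmem FI.I FI.Gamma i j a) (hb : D.pmem FJ.I FJ.Gamma j i b) :
    Commute (E.T k h c) ⁅E.T i j a, E.T j i b⁆ := by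
  have hij' : neg j ≠ neg i := fun e => hij (Idx.neg_injective e).symm
  by_cases hhi : h = i
  · exact hhi ▸ commute_T_left_commutatorElement hE hij hki hkj c ha hb
  by_cases hhj : h = j
  · exact hhj ▸ commute_T_right_commutatorElement hE hij hki hkj c ha hb
  by_cases hhi' : h = neg i
  · rw [hhi', ← commutatorElement_T_dual hij ha hb]
    exact commute_T_right_commutatorElement hE hij' hkj hki c (FI.pmem_dual ha) (FJ.pmem_dual hb)
  by_cases hhj' : h = neg j
  · rw [hhj', ← commutatorElement_T_dual hij ha hb]
    exact commute_T_left_commutatorElement hE hij' hkj hki c (FI.pmem_dual ha) (FJ.pmem_dual hb)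
  obtain ⟨hki₁, hki₂⟩ := Idx.fst_ne_iff.mp hki
  obtain ⟨hkj₁, hkj₂⟩ := Idx.fst_ne_iff.mp hkj
  exact commute_commutatorElement
    (E.T_commute hij hkh hkj₁ hki₂ hhi hhj' (FI.isAdmissible ha) hc).symm
    (E.T_commute hij.symm hkh hki₁ hkj₂ hhj hhi' (FJ.isAdmissible hb) hc).symm

theorem commutatorElement_mem_center (hE : E.KillsProduct FI FJ) (hm : 3 ≤ m)
    (htop : E.FU (FormIdeal.top D) = ⊤) (hij : i ≠ j) (ha : D.pmem FI.I FI.Gamma i j a)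
    (hb : D.pmem FJ.I FJ.Gamma j i b) : ⁅E.T i j a, E.T j i b⁆ ∈ Subgroup.center Q :=
  mem_center_of_commute hm htop i.1 j.1 fun _ _ _ hkl hki hkj hc =>
    (commute_T_commutatorElement hE hij hki hkj hkl hc ha hb).symm

theorem commutatorElement_transfer_short (hE : E.KillsProduct FI FJ) (hij : i.1 ≠ j.1)
    (hjk : j.1 ≠ k.1) (hik : i.1 ≠ k.1) (ha : a ∈ FI.I) (hb : b ∈ FJ.I) :
    ⁅E.T k j a, E.T j k (-b)⁆ * ⁅E.T i j a, E.T j i b⁆ = 1 := by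
  -- Conjugation by `T_{ik}(1)` splits each of the commuting elements `T_{kj}(a)`, `T_{ji}(b)` into
  -- two factors, so the two resulting opposite commutators cancel.
  obtain ⟨hij₁, -⟩ := Idx.fst_ne_iff.mp hij
  obtain ⟨hjk₁, -⟩ := Idx.fst_ne_iff.mp hjk
  obtain ⟨hki₁, hki₂⟩ := Idx.fst_ne_iff.mp hik.symm
  have haij : D.pmem FI.I FI.Gamma i j a := pmem_of_fst_ne hij ha
  have hakj : D.pmem FI.I FI.Gamma k j a := pmem_of_fst_ne hjk.symm ha
  have hbji : D.pmem FJ.I FJ.Gamma j i b := pmem_of_fst_ne hij.symm hb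
  have hbjk : D.pmem FJ.I FJ.Gamma j k (-b) := pmem_of_fst_ne hjk (neg_mem hb)
  have hu : E.T i k 1 * E.T k j a = E.T i j a * E.T k j a * E.T i k 1 := by
    simpa only [one_mul] using E.T_mul_short 1 a hik hjk.symm hij
  have hy : Commute (E.T j i b) (E.T j k (-b)) :=
    commute_of_fst_eq hij₁.symm hjk₁ hki₂ (FJ.isAdmissible hbji) (FJ.isAdmissible hbjk)
  have hv : E.T i k 1 * E.T j i b = E.T j i b * E.T j k (-b) * E.T i k 1 := by
    have hrel := E.T_mul_short b 1 hij.symm hik hjk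
    rw [hy.eq, T_neg _ hjk₁ (isAdmissible_of_fst_ne hjk b), mul_assoc, eq_inv_mul_iff_mul_eq, hrel,
      mul_one, mul_assoc]
  have hkji : Commute (E.T k j a) (E.T j i b) :=
    commute_of_adjacent hE hjk₁.symm hij₁.symm hki₁ hakj hbji
  exact commutatorElement_mul_commutatorElement_eq_one_of_conj hkji hu hv
    (commute_of_snd_eq hij₁ hjk₁.symm hki₂ (FI.isAdmissible haij) (FI.isAdmissible hakj))
    (commute_of_adjacent hE hij₁ hjk₁ hki₁.symm haij hbjk) hkji.symm hy

theorem commutatorElement_mul_commutatorElement_long (hik : i.1 ≠ k.1)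
    (hxi : D.IsAdmissible i (neg i) x) (hxk : D.IsAdmissible k (neg k) x)
    (hyi : D.IsAdmissible (neg i) i y) (hyk : D.IsAdmissible (neg k) k y) :
    ⁅E.T k (neg k) x, E.T (neg k) k y⁆ * ⁅E.T i (neg i) x, E.T (neg i) i y⁆ =
      ⁅E.T i (neg i) x * E.T k (neg k) x, E.T (neg k) k y * E.T (neg i) i y⁆ := by
  have hik' : i.1 ≠ k.1 ∧ i.1 ≠ k.1 := ⟨hik, hik⟩
  have hki' : k.1 ≠ i.1 ∧ k.1 ≠ i.1 := ⟨hik.symm, hik.symm⟩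
  have hii := Idx.neg_ne i
  have hkk := Idx.neg_ne k
  rw [(commute_of_disjoint hkk hii hki' hki' hyk hyi).eq]
  exact (commutatorElement_mul_mul_of_commute
    (commute_of_disjoint hii.symm hkk.symm hik' hik' hxi hxk)
    (commute_of_disjoint hii.symm hkk hik' hik' hxi hyk)
    (commute_of_disjoint hii hkk.symm hik' hik' hyi hxk)
    (commute_of_disjoint hii hkk hik' hik' hyi hyk)).symm

theorem commute_bridge_mul_long (hik : i.1 ≠ k.1) (hc : D.IsAdmissible i (neg k) c)
    (hx : D.IsAdmissible i (neg i) x) (hy : D.IsAdmissible k (neg k) y) :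
    Commute (E.T i (neg k) c) (E.T i (neg i) x * E.T k (neg k) y) := by
  have hne : i ≠ neg k := ne_of_apply_ne Prod.fst hik
  exact (commute_of_fst_eq hne (Idx.neg_ne i).symm (ne_of_apply_ne Prod.fst hik) hc hx).mul_right
    (commute_of_snd_eq hne (Idx.neg_ne k).symm (ne_of_apply_ne Prod.fst hik.symm) hc hy)

theorem commute_bridge_mul_opposite_long (hE : E.KillsProduct FI FJ) (hik : i.1 ≠ k.1)
    (hc : D.pmem FI.I FI.Gamma i (neg k) c) (hx : D.pmem FJ.I FJ.Gamma (neg k) k x)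
    (hy : D.pmem FJ.I FJ.Gamma (neg i) i y) :
    Commute (E.T i (neg k) c) (E.T (neg k) k x * E.T (neg i) i y) := by
  have hne : i ≠ neg k := ne_of_apply_ne Prod.fst hik
  exact (commute_of_adjacent hE hne (Idx.neg_ne k) (ne_of_apply_ne Prod.fst hik) hc hx).mul_right
    (commute_of_adjacent hE.symm (Idx.neg_ne i) hne (ne_of_apply_ne Prod.fst hik) hy hc).symm

theorem commutatorElement_transfer_long (hE : E.KillsProduct FI FJ) (hik : i.1 ≠ k.1)
    (hs : i.2 = k.2) (hx : D.pmem FI.I FI.Gamma i (neg i) x)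
    (hy : D.pmem FJ.I FJ.Gamma (neg i) i y) :
    ⁅E.T k (neg k) x, E.T (neg k) k y⁆ * ⁅E.T i (neg i) x, E.T (neg i) i y⁆ *
      ⁅E.T i (neg k) x, E.T (neg k) i (-y)⁆ = 1 := by
  -- Conjugating `T_{k,-k}(x)` and `T_{-i,i}(y)` by `T_{ik}(1)` also creates a pair of short
  -- elements, whose commutator is the third factor.
  have hx' : D.pmem FI.I FI.Gamma k (neg k) x := (pmem_neg_congr hs).mp hx
  have hy' : D.pmem FJ.I FJ.Gamma (neg k) k y := (pmem_neg_left_congr hs).mp hy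
  have hxik : D.pmem FI.I FI.Gamma i (neg k) x :=
    pmem_of_fst_ne (j := neg k) hik (FI.mem_of_pmem hx)
  have hyki : D.pmem FJ.I FJ.Gamma (neg k) i (-y) :=
    pmem_of_fst_ne (i := neg k) hik.symm (neg_mem (FJ.mem_of_pmem hy))
  have hki : (neg k).1 ≠ (neg i).1 := hik.symm
  have hyx : Commute (E.T (neg k) i (-y)) (E.T i (neg i) x * E.T k (neg k) x) := by
    have := commute_bridge_mul_opposite_long hE.symm hki (c := -y) (x := x) (y := x)
    simp only [Idx.neg_neg] at this
    exact this hyki hx hx'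
  have hyy : Commute (E.T (neg k) i (-y)) (E.T (neg k) k y * E.T (neg i) i y) := by
    have := commute_bridge_mul_long (E := E) hki (c := -y) (x := y) (y := y)
    simp only [Idx.neg_neg] at this
    exact this (FJ.isAdmissible hyki) (FJ.isAdmissible hy') (FJ.isAdmissible hy)
  have hxy : Commute (E.T k (neg k) x) (E.T (neg i) i y) :=
    commute_of_disjoint (Idx.neg_ne k).symm (Idx.neg_ne i) ⟨hik.symm, hik.symm⟩
      ⟨hik.symm, hik.symm⟩ (FI.isAdmissible hx') (FJ.isAdmissible hy)
  rw [commutatorElement_mul_commutatorElement_long hik (FI.isAdmissible hx) (FI.isAdmissible hx')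
    (FJ.isAdmissible hy) (FJ.isAdmissible hy')]
  exact commutatorElement_mul_commutatorElement_eq_one_of_conj hxy
    ((T_one_mul_long hik hs (FI.isAdmissible hx')).trans (by rw [mul_assoc (E.T i (neg k) x)]))
    ((T_one_mul_opposite_long hik hs (FJ.isAdmissible hy)).trans
      (by rw [mul_assoc (E.T (neg k) i (-y))]))
    (commute_bridge_mul_long hik (FI.isAdmissible hxik) (FI.isAdmissible hx) (FI.isAdmissible hx'))
    (commute_bridge_mul_opposite_long hE hik hxik hy' hy) hyx hyy

end KillsProduct

section Generation

variable {E : D.SteinbergSystem m Q} {FI FJ : FormIdeal D} {i j : Idx m} {a b x y : A} {p : Fin m}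

theorem short_mem_closure_oppositeCommutators (hE : E.KillsProduct FI FJ) (hm : 3 ≤ m)
    (hij : i.1 ≠ j.1) (ha : a ∈ FI.I) (hb : b ∈ FJ.I) :
    ⁅E.T i j a, E.T j i b⁆ ∈ Subgroup.closure (E.oppositeCommutators FI FJ p) := by
  have hmem {i j : Idx m} {a b : A} (hij : i.1 ≠ j.1) (hi : i.1 ≠ p) (hj : j.1 ≠ p) (ha : a ∈ FI.I)
      (hb : b ∈ FJ.I) :
      ⁅E.T i j a, E.T j i b⁆ ∈ Subgroup.closure (E.oppositeCommutators FI FJ p) :=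
    Subgroup.subset_closure ⟨i, j, a, b, ne_of_apply_ne Prod.fst hij, hi, hj,
      pmem_of_fst_ne hij ha, pmem_of_fst_ne hij.symm hb, rfl⟩
  have hleft {i j : Idx m} {a b : A} (hij : i.1 ≠ j.1) (hj : j.1 ≠ p) (ha : a ∈ FI.I)
      (hb : b ∈ FJ.I) :
      ⁅E.T i j a, E.T j i b⁆ ∈ Subgroup.closure (E.oppositeCommutators FI FJ p) := by
    by_cases hi : i.1 = p
    · obtain ⟨r, hri, hrj⟩ := exists_ne_ne hm i.1 j.1
      have htransfer :=
        commutatorElement_transfer_short hE (k := (r, true)) hij hrj.symm hri.symm ha hb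
      rw [eq_inv_of_mul_eq_one_right htransfer]
      exact inv_mem (hmem hrj (hi ▸ hri) hj ha (neg_mem hb))
    · exact hmem hij hi hj ha hb
  by_cases hj : j.1 = p
  · have haij : D.pmem FI.I FI.Gamma i j a := pmem_of_fst_ne hij ha
    have hbji : D.pmem FJ.I FJ.Gamma j i b := pmem_of_fst_ne hij.symm hb
    rw [← commutatorElement_T_dual (ne_of_apply_ne Prod.fst hij) haij hbji]
    exact hleft (i := neg j) (j := neg i) hij.symm (hj ▸ hij) (FI.mem_of_pmem (FI.pmem_dual haij))
      (FJ.mem_of_pmem (FJ.pmem_dual hbji))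
  · exact hleft hij hj ha hb

theorem long_mem_closure_oppositeCommutators (hE : E.KillsProduct FI FJ) (hm : 3 ≤ m)
    (hx : D.pmem FI.I FI.Gamma i (neg i) x) (hy : D.pmem FJ.I FJ.Gamma (neg i) i y) :
    ⁅E.T i (neg i) x, E.T (neg i) i y⁆ ∈ Subgroup.closure (E.oppositeCommutators FI FJ p) := by
  have hii : i ≠ neg i := (Idx.neg_ne i).symm
  by_cases hi : i.1 = p
  · obtain ⟨r, hri, -⟩ := exists_ne_ne hm i.1 i.1
    let k : Idx m := (r, i.2)
    have hik : i.1 ≠ (neg k).1 := hri.symm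
    have hxk : D.pmem FI.I FI.Gamma k (neg k) x := (pmem_neg_congr (i := i) (j := k) rfl).mp hx
    have hyk : D.pmem FJ.I FJ.Gamma (neg k) k y := (pmem_neg_left_congr (i := i) (j := k) rfl).mp hy
    have hk : ⁅E.T k (neg k) x, E.T (neg k) k y⁆ ∈
        Subgroup.closure (E.oppositeCommutators FI FJ p) :=
      Subgroup.subset_closure
        ⟨k, neg k, x, y, (Idx.neg_ne k).symm, hi ▸ hri, hi ▸ hri, hxk, hyk, rfl⟩
    have hbridge : ⁅E.T i (neg k) x, E.T (neg k) i (-y)⁆ ∈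
        Subgroup.closure (E.oppositeCommutators FI FJ p) :=
      short_mem_closure_oppositeCommutators hE hm hik (FI.mem_of_pmem hx)
        (neg_mem (FJ.mem_of_pmem hy))
    have htransfer := commutatorElement_transfer_long hE (k := k) hri.symm rfl hx hy
    rw [mul_assoc, mul_eq_one_iff_inv_eq, eq_comm, ← eq_mul_inv_iff_mul_eq] at htransfer
    rw [htransfer]
    exact mul_mem (inv_mem hk) (inv_mem hbridge)
  · exact Subgroup.subset_closure ⟨i, neg i, x, y, hii, hi, hi, hx, hy, rfl⟩

theorem mem_closure_oppositeCommutators (hE : E.KillsProduct FI FJ) (hm : 3 ≤ m) (hij : i ≠ j)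
    (ha : D.pmem FI.I FI.Gamma i j a) (hb : D.pmem FJ.I FJ.Gamma j i b) :
    ⁅E.T i j a, E.T j i b⁆ ∈ Subgroup.closure (E.oppositeCommutators FI FJ p) := by
  by_cases h : i.1 = j.1
  · obtain rfl : j = neg i :=
      Idx.eq_neg_comm.mp ((Idx.eq_or_eq_neg_of_fst_eq h).resolve_left hij)
    exact long_mem_closure_oppositeCommutators hE hm ha hb
  · exact short_mem_closure_oppositeCommutators hE hm h (FI.mem_of_pmem ha) (FJ.mem_of_pmem hb)

theorem commutator_FU_le_closure_oppositeCommutators (hE : E.KillsProduct FI FJ) (hm : 3 ≤ m)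
    (htop : E.FU (FormIdeal.top D) = ⊤) (p : Fin m) :
    ⁅E.FU FI, E.FU FJ⁆ ≤ Subgroup.closure (E.oppositeCommutators FI FJ p) := by
  have hcenter : Subgroup.closure (E.oppositeCommutators FI FJ p) ≤ Subgroup.center Q := by
    rw [Subgroup.closure_le]
    rintro _ ⟨i, j, a, b, hij, -, -, ha, hb, rfl⟩
    exact commutatorElement_mem_center hE hm htop hij ha hb
  have := normal_of_le_center hcenter
  refine commutator_closure_le ?_
  rintro _ ⟨i, j, a, hij, ha, rfl⟩ _ ⟨h, k, b, hhk, hb, rfl⟩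
  by_cases hopp : h = j ∧ k = i
  · obtain ⟨rfl, rfl⟩ := hopp
    exact mem_closure_oppositeCommutators hE hm hij ha hb
  by_cases hopp' : h = neg i ∧ k = neg j
  · obtain ⟨rfl, rfl⟩ := hopp'
    have hb' := FJ.pmem_dual hb
    rw [← E.T_dual hhk (FJ.isAdmissible hb)]
    rw [Idx.neg_neg, Idx.neg_neg] at hb' ⊢
    exact mem_closure_oppositeCommutators hE hm hij ha hb'
  rw [commutatorElement_eq_one_iff_commute.mpr (commute_of_not_opposite hE hij hhk
    (not_and.mp hopp) (not_and.mp hopp') ha hb)]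
  exact one_mem _

theorem exists_mem_closure_oppositeCommutators (hm : 3 ≤ m) (p : Fin m) {N : Subgroup Q}
    (hN : (N.subgroupOf (E.FU (FormIdeal.top D))).Normal)
    (hprod : ∀ ⦃i j : Idx m⦄ ⦃a : A⦄, i ≠ j →
      D.pmem (symI FI.I FJ.I) (D.symG FI.I FI.Gamma FJ.I FJ.Gamma) i j a → E.T i j a ∈ N)
    {y : Q} (hy : y ∈ ⁅E.FU FI, E.FU FJ⁆) :
    ∃ x ∈ Subgroup.closure (E.oppositeCommutators FI FJ p), y⁻¹ * x ∈ N := by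
  let π := QuotientGroup.mk' (N.subgroupOf (E.FU (FormIdeal.top D)))
  have hkills : (E.restrict.map π).KillsProduct FI FJ := fun i j a hij ha => by
    refine (QuotientGroup.eq_one_iff _).mpr (Subgroup.mem_subgroupOf.mpr ?_)
    rw [restrict, coe_restrictT hij (ha.mono le_top (symG_le_Lambda FI FJ))]
    exact hprod hij ha
  have htop : (E.restrict.map π).FU (FormIdeal.top D) = ⊤ := by
    rw [FU_map, FU_restrict_top, Subgroup.map_top_of_surjective _ (QuotientGroup.mk'_surjective _)]
  rw [← map_subtype_FU_restrict E FI, ← map_subtype_FU_restrict E FJ,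
    ← Subgroup.map_commutator] at hy
  obtain ⟨y, hy, rfl⟩ := hy
  have hπy : π y ∈ (Subgroup.closure (E.restrict.oppositeCommutators FI FJ p)).map π := by
    rw [MonoidHom.map_closure, ← oppositeCommutators_map]
    apply commutator_FU_le_closure_oppositeCommutators hkills hm htop p
    rw [FU_map, FU_map, ← Subgroup.map_commutator]
    exact Subgroup.mem_map_of_mem π hy
  obtain ⟨x, hx, hxy⟩ := hπy
  refine ⟨x, ?_, Subgroup.mem_subgroupOf.mp (QuotientGroup.eq.mp hxy.symm)⟩
  have hle : (Subgroup.closure (E.restrict.oppositeCommutators FI FJ p)).map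
      (E.FU (FormIdeal.top D)).subtype ≤ Subgroup.closure (E.oppositeCommutators FI FJ p) := by
    rw [MonoidHom.map_closure]
    exact Subgroup.closure_mono (Set.image_subset_iff.mpr fun _ => E.coe_mem_oppositeCommutators)
  exact hle (Subgroup.mem_map_of_mem _ hx)

end Generation

end FormRingData.SteinbergSystem

namespace FormRingData

variable {A : Type*} [Ring A] {D : FormRingData A} {m n : ℕ}

section RelativeGroups

variable {I Γ : AddSubgroup A}

theorem transvGen_eq : D.transvGen m I Γ =
    {x | ∃ i j a, i ≠ j ∧ D.pmem I Γ i j a ∧ x = D.T i j a} := by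
  ext x
  constructor
  · rintro (⟨i, j, hij, hij', c, hc, rfl⟩ | ⟨i, g, hg, rfl⟩)
    · have hji : j ≠ Idx.neg i := fun e => hij' (Idx.eq_neg_comm.mp e)
      exact ⟨i, j, c, hij, (D.pmem_iff_of_ne hji).mpr hc, by rw [T, if_neg hji]⟩
    · exact ⟨i, Idx.neg i, _, (Idx.neg_ne i).symm, pmem_neg_of_mem hg, by rw [T, if_pos rfl]; rfl⟩
  · rintro ⟨i, j, a, hij, ha, rfl⟩
    by_cases hji : j = Idx.neg i
    · subst hji
      obtain ⟨g, hg, rfl⟩ := D.pmem_neg_iff.mp ha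
      exact Or.inr ⟨i, g, hg, by rw [T, if_pos rfl]; rfl⟩
    · exact Or.inl ⟨i, j, hij, fun e => hji (Idx.eq_neg_comm.mp e), a,
        (D.pmem_iff_of_ne hji).mp ha, by rw [T, if_neg hji]⟩

theorem FU_transvectionSystem (F : FormIdeal D) :
    (D.transvectionSystem m).FU F = D.FU m F.I F.Gamma := by
  rw [FU, transvGen_eq]
  rfl

theorem T_mem_EU {i j : Idx m} {a : A} (hij : i ≠ j) (ha : D.pmem I Γ i j a) :
    D.T i j a ∈ D.EU m I Γ :=
  Subgroup.subset_closure ⟨1, one_mem _, D.T i j a, transvGen_eq.ge ⟨i, j, a, hij, ha, rfl⟩,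
    by rw [one_mul, _root_.inv_one, mul_one]⟩

theorem EU_subgroupOf_normal : ((D.EU m I Γ).subgroupOf (D.EUmax m)).Normal where
  conj_mem x hx g := by
    rw [Subgroup.mem_subgroupOf] at hx ⊢
    have hle : D.EU m I Γ ≤ (D.EU m I Γ).comap (MulAut.conj (g : GLn A m)).toMonoidHom := by
      conv_lhs => rw [EU]
      rw [Subgroup.closure_le]
      rintro _ ⟨h, hh, t, ht, rfl⟩
      refine Subgroup.subset_closure ⟨g * h, mul_mem g.2 hh, t, ht, ?_⟩
      rw [MulEquiv.coe_toMonoidHom, MulAut.conj_apply, _root_.mul_inv_rev]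
      simp only [mul_assoc]
    exact hle hx

end RelativeGroups

section Stability

/-- The inclusion `Ω_n ⊆ Ω_{n+1}`, whose image misses exactly the indices `±(n+1)`. -/
def inc (i : Idx n) : Idx (n + 1) := (i.1.castSucc, i.2)

theorem inc_injective : Function.Injective (inc (n := n)) := fun _ _ h =>
  Prod.ext (Fin.castSucc_injective n (Prod.ext_iff.mp h).1) (Prod.ext_iff.mp h).2

theorem inc_neg (i : Idx n) : inc (Idx.neg i) = Idx.neg (inc i) := rfl

theorem exists_inc_eq {i : Idx (n + 1)} (hi : i.1 ≠ Fin.last n) : ∃ j, inc j = i := by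
  obtain ⟨p, hp⟩ := Fin.exists_castSucc_eq.mpr hi
  exact ⟨(p, i.2), Prod.ext hp rfl⟩

theorem idxSumEquiv_inl (i : Idx n) : idxSumEquiv n (Sum.inl i) = inc i := by
  rcases i with ⟨p, s⟩
  simp [idxSumEquiv, inc, Prod.ext_iff, Fin.ext_iff]

theorem embMat_one_add (M : Matrix (Idx n) (Idx n) A) :
    embMat n (1 + M) = 1 + (fromBlocks M 0 0 (0 : Matrix Bool Bool A)).submatrix
      (idxSumEquiv n).symm (idxSumEquiv n).symm := by
  have hblocks : fromBlocks (1 + M) 0 0 (1 : Matrix Bool Bool A) =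
      fromBlocks 1 0 0 1 + fromBlocks M 0 0 0 := by
    simp only [fromBlocks_add, add_zero]
  rw [← embMat_one n, embMat, embMat, hblocks]
  rfl

theorem submatrix_fromBlocks_single (i j : Idx n) (c : A) :
    (fromBlocks (single i j c) 0 0 (0 : Matrix Bool Bool A)).submatrix
      (idxSumEquiv n).symm (idxSumEquiv n).symm = single (inc i) (inc j) c := by
  ext x y
  obtain ⟨x, rfl⟩ := (idxSumEquiv n).surjective x
  obtain ⟨y, rfl⟩ := (idxSumEquiv n).surjective y
  rw [← idxSumEquiv_inl, ← idxSumEquiv_inl]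
  rcases x with x | x <;> rcases y with y | y <;>
    simp [single_apply, (idxSumEquiv n).injective.eq_iff]

theorem embMat_one_add_rootMat (i j : Idx n) (c : A) :
    embMat n (1 + D.rootMat i j c) = 1 + D.rootMat (inc i) (inc j) c := by
  rw [embMat_one_add]
  congr 1
  by_cases h : j = Idx.neg i
  · rw [h, inc_neg, rootMat_neg, rootMat_neg, submatrix_fromBlocks_single, inc_neg]
  · have hinc : inc j ≠ Idx.neg (inc i) := fun e => h (inc_injective e)
    have hdual : D.dual (inc i) (inc j) c = D.dual i j c := rfl
    have hadd := fromBlocks_add (single i j c) 0 0 (0 : Matrix Bool Bool A)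
      (single (Idx.neg j) (Idx.neg i) (D.dual i j c)) 0 0 0
    simp only [add_zero] at hadd
    rw [rootMat, rootMat, if_neg h, if_neg hinc, hdual, ← hadd, submatrix_add, Pi.add_apply,
      Pi.add_apply, submatrix_fromBlocks_single, submatrix_fromBlocks_single, inc_neg, inc_neg]

theorem embGL_T {i j : Idx n} (hij : i ≠ j) (c : A) :
    embGL A n (D.T i j c) = D.T (inc i) (inc j) c := by
  apply Units.ext
  rw [T_val (inc_injective.ne hij), ← embMat_one_add_rootMat, ← T_val hij]
  rfl

theorem pmem_inc_iff {I Γ : AddSubgroup A} {i j : Idx n} {a : A} :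
    D.pmem I Γ (inc i) (inc j) a ↔ D.pmem I Γ i j a := by
  simp only [pmem, ← inc_neg, inc_injective.eq_iff]
  rfl

theorem closure_oppositeCommutators_last_le (FI FJ : FormIdeal D) :
    Subgroup.closure ((D.transvectionSystem (n + 1)).oppositeCommutators FI FJ (Fin.last n)) ≤
      ⁅D.FU n FI.I FI.Gamma, D.FU n FJ.I FJ.Gamma⁆.map (embGL A n) := by
  rw [Subgroup.closure_le]
  rintro _ ⟨i, j, a, b, hij, hi, hj, ha, hb, rfl⟩
  obtain ⟨i, rfl⟩ := exists_inc_eq hi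
  obtain ⟨j, rfl⟩ := exists_inc_eq hj
  have hij : i ≠ j := ne_of_apply_ne inc hij
  have hT {F : FormIdeal D} {i j : Idx n} {a : A} (hij : i ≠ j)
      (ha : D.pmem F.I F.Gamma (inc i) (inc j) a) : D.T i j a ∈ D.FU n F.I F.Gamma :=
    FU_transvectionSystem F ▸ (D.transvectionSystem n).T_mem_FU F hij (pmem_inc_iff.mp ha)
  refine ⟨⁅D.T i j a, D.T j i b⁆,
    Subgroup.commutator_mem_commutator (hT hij ha) (hT hij.symm hb), ?_⟩
  rw [map_commutatorElement, embGL_T hij, embGL_T hij.symm]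
  rfl

end Stability

end FormRingData

open FormRingData

theorem statement6_general {A : Type*} [Ring A] (D : FormRingData A) (n : ℕ) (hn : 2 ≤ n)
    (FI FJ : FormIdeal D) :
    ∀ y ∈ ⁅D.FU (n + 1) FI.I FI.Gamma, D.FU (n + 1) FJ.I FJ.Gamma⁆,
      ∃ x ∈ ⁅D.FU n FI.I FI.Gamma, D.FU n FJ.I FJ.Gamma⁆,
        y⁻¹ * embGL A n x ∈ D.EUsym (n + 1) FI.I FI.Gamma FJ.I FJ.Gamma := by
  intro y hy
  have hnormal : ((D.EUsym (n + 1) FI.I FI.Gamma FJ.I FJ.Gamma).subgroupOf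
      ((D.transvectionSystem (n + 1)).FU (FormIdeal.top D))).Normal := by
    rw [FU_transvectionSystem]
    exact EU_subgroupOf_normal
  rw [← FU_transvectionSystem, ← FU_transvectionSystem] at hy
  obtain ⟨_, hz, hyz⟩ := SteinbergSystem.exists_mem_closure_oppositeCommutators
    (Nat.succ_le_succ hn) (Fin.last n) hnormal (fun _ _ _ => T_mem_EU) hy
  obtain ⟨x, hx, rfl⟩ := closure_oppositeCommutators_last_le FI FJ hz
  exact ⟨x, hx, hyz⟩

/-- Theorem 9: surjective stability for the quotients
`[FU(2n,I,Γ),FU(2n,J,Δ)]/EU(2n,(I,Γ)∘(J,Δ))`. -/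
theorem statement6 {A : Type*} [Ring A] (D : FormRingData A) (n : ℕ) (hn : 3 ≤ n)
    (FI FJ : FormIdeal D) :
    ∀ y ∈ ⁅D.FU (n + 1) FI.I FI.Gamma, D.FU (n + 1) FJ.I FJ.Gamma⁆,
      ∃ x ∈ ⁅D.FU n FI.I FI.Gamma, D.FU n FJ.I FJ.Gamma⁆,
        y⁻¹ * embGL A n x ∈ D.EUsym (n + 1) FI.I FI.Gamma FJ.I FJ.Gamma :=
  statement6_general D n (Nat.le_of_succ_le hn) FI FJ
end

section
/- Let (A,Λ) be any associative form ring, let (I,Γ) and (J,Δ) be two form ideals of (A,Λ), and let n ≥ 3. Define the sum of form ideals as (I,Γ)+(J,Δ) = (I+J, Γ+Δ) and the intersection as (I,Γ)∩(J,Δ) = (I∩J, Γ∩Δ). Then [EU(2n,(I,Γ)+(J,Δ)), EU(2n,(I,Γ)∩(J,Δ))] ≤ [EU(2n,I,Γ), EU(2n,J,Δ)]. -/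
open Matrix
open scoped commutatorElement

/-!
Transvections are additive in their parameter, so `EU(2n, -)` turns sums of levels into joins of
subgroups; it also preserves inclusions, so it sends an intersection of levels into the intersection
of the corresponding subgroups. The theorem is thereby an instance of the inclusion
`⁅H ⊔ K, H ⊓ K⁆ ≤ ⁅H, K⁆`, valid for any two subgroups `H`, `K` of a group. Since both `H` and `K`
normalize `⁅H, K⁆`, the identity `⁅xy, z⁆ = x⁅y, z⁆x⁻¹ ⁅x, z⁆` reduces this inclusion to
`⁅H, H ⊓ K⁆ ≤ ⁅H, K⁆` and `⁅K, H ⊓ K⁆ ≤ ⁅K, H⁆ = ⁅H, K⁆`.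
-/

section Commutator

variable {G : Type*} [Group G]

theorem commutator_sup_le_of_le_normalizer {H₁ H₂ K N : Subgroup G}
    (hN₁ : H₁ ≤ Subgroup.normalizer N) (hN₂ : H₂ ≤ Subgroup.normalizer N)
    (h₁ : ⁅H₁, K⁆ ≤ N) (h₂ : ⁅H₂, K⁆ ≤ N) : ⁅H₁ ⊔ H₂, K⁆ ≤ N := by
  rw [Subgroup.commutator_le] at h₁ h₂ ⊢
  intro g hg k hk
  have conj_mem : ∀ x ∈ H₁ ⊔ H₂, ∀ y ∈ N, x * y * x⁻¹ ∈ N :=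
    Subgroup.le_normalizer_iff.1 (sup_le hN₁ hN₂)
  rw [Subgroup.sup_eq_closure] at hg conj_mem
  induction hg using Subgroup.closure_induction with
  | mem x hx => exact hx.elim (h₁ x · k hk) (h₂ x · k hk)
  | one => simp only [commutatorElement_one_left, one_mem]
  | mul x y hx _ hxk hyk =>
    rw [commutatorElement_mul_left_eq_conj_mul]
    exact mul_mem (conj_mem x hx _ hyk) hxk
  | inv x hx hxk =>
    rw [commutatorElement_inv_left, ← commutatorElement_inv]
    simpa only [inv_inv] using conj_mem x⁻¹ (inv_mem hx) _ (inv_mem hxk)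

theorem commutator_sup_inf_le (H K : Subgroup G) : ⁅H ⊔ K, H ⊓ K⁆ ≤ ⁅H, K⁆ := by
  refine commutator_sup_le_of_le_normalizer
    (Subgroup.normalizer_commutator_ge_left H K) (Subgroup.normalizer_commutator_ge_right H K)
    (Subgroup.commutator_mono le_rfl inf_le_right) ?_
  rw [Subgroup.commutator_comm H K]
  exact Subgroup.commutator_mono le_rfl inf_le_left

end Commutator

theorem one_add_add_eq_mul_of_mul_eq_zero {R : Type*} [NonAssocSemiring R] {x y : R}
    (h : x * y = 0) : 1 + (x + y) = (1 + x) * (1 + y) := by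
  rw [mul_add, mul_one, add_mul, one_mul, h, add_zero, add_assoc]

namespace FormRingData

open scoped Pointwise

variable {A : Type*} [Ring A] {n : ℕ} (D : FormRingData A)

theorem Xmat_add (i j : Idx n) (a b : A) :
    D.Xmat i j (a + b) = D.Xmat i j a + D.Xmat i j b := by
  simp only [Xmat, map_add, mul_add, single_add]
  abel

theorem TS_add (i j : Idx n) (a b : A) : D.TS i j (a + b) = D.TS i j a * D.TS i j b := by
  by_cases hij : i = j
  · simp only [TS, dif_pos hij, mul_one]
  · ext1
    simpa only [TS, dif_neg hij, Xmat_add, Units.val_mul] using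
      one_add_add_eq_mul_of_mul_eq_zero (D.Xmat_mul hij a b)

theorem TL_add (i : Idx n) (a b : A) : D.TL i (a + b) = D.TL i a * D.TL i b := by
  ext1
  simpa only [TL, single_add, Units.val_mul] using one_add_add_eq_mul_of_mul_eq_zero
    (single_mul_single_of_ne a i (Idx.neg i) i (Idx.neg_ne i) b)

variable {I J Γ Δ : AddSubgroup A}

theorem transvGen_mono (hI : I ≤ J) (hΓ : Γ ≤ Δ) : D.transvGen n I Γ ⊆ D.transvGen n J Δ := by
  rintro _ (⟨i, j, hij, hij', c, hc, rfl⟩ | ⟨i, g, hg, rfl⟩)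
  · exact Or.inl ⟨i, j, hij, hij', c, hI hc, rfl⟩
  · exact Or.inr ⟨i, g, hΓ hg, rfl⟩

theorem transvGen_sup_subset_mul :
    D.transvGen n (I ⊔ J) (Γ ⊔ Δ) ⊆ D.transvGen n I Γ * D.transvGen n J Δ := by
  rintro _ (⟨i, j, hij, hij', c, hc, rfl⟩ | ⟨i, g, hg, rfl⟩)
  · obtain ⟨a, ha, b, hb, rfl⟩ := AddSubgroup.mem_sup.1 hc
    rw [TS_add]
    exact Set.mul_mem_mul (Or.inl ⟨i, j, hij, hij', a, ha, rfl⟩)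
      (Or.inl ⟨i, j, hij, hij', b, hb, rfl⟩)
  · obtain ⟨a, ha, b, hb, rfl⟩ := AddSubgroup.mem_sup.1 hg
    rw [mul_add, TL_add]
    exact Set.mul_mem_mul (Or.inr ⟨i, a, ha, rfl⟩) (Or.inr ⟨i, b, hb, rfl⟩)

theorem conj_mem_EU {g t : GLn A n} (hg : g ∈ D.EUmax n) (ht : t ∈ D.transvGen n I Γ) :
    g * t * g⁻¹ ∈ D.EU n I Γ :=
  Subgroup.subset_closure ⟨g, hg, t, ht, rfl⟩

theorem EU_mono (hI : I ≤ J) (hΓ : Γ ≤ Δ) : D.EU n I Γ ≤ D.EU n J Δ := by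
  refine (Subgroup.closure_le _).2 ?_
  rintro _ ⟨g, hg, t, ht, rfl⟩
  exact D.conj_mem_EU hg (D.transvGen_mono hI hΓ ht)

theorem EU_sup (n : ℕ) (I J Γ Δ : AddSubgroup A) :
    D.EU n (I ⊔ J) (Γ ⊔ Δ) = D.EU n I Γ ⊔ D.EU n J Δ := by
  refine le_antisymm ((Subgroup.closure_le _).2 ?_)
    (sup_le (D.EU_mono le_sup_left le_sup_left) (D.EU_mono le_sup_right le_sup_right))
  rintro _ ⟨g, hg, t, ht, rfl⟩
  obtain ⟨u, hu, v, hv, rfl⟩ := D.transvGen_sup_subset_mul ht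
  rw [← conj_mul]
  exact Subgroup.mul_mem_sup (D.conj_mem_EU hg hu) (D.conj_mem_EU hg hv)

theorem EU_inf_le (n : ℕ) (I J Γ Δ : AddSubgroup A) :
    D.EU n (I ⊓ J) (Γ ⊓ Δ) ≤ D.EU n I Γ ⊓ D.EU n J Δ :=
  le_inf (D.EU_mono inf_le_left inf_le_left) (D.EU_mono inf_le_right inf_le_right)

end FormRingData

theorem statement7_general {A : Type*} [Ring A] (D : FormRingData A) (n : ℕ)
    (I J Γ Δ : AddSubgroup A) :
    ⁅D.EU n (I ⊔ J) (Γ ⊔ Δ), D.EU n (I ⊓ J) (Γ ⊓ Δ)⁆ ≤ ⁅D.EU n I Γ, D.EU n J Δ⁆ := by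
  rw [D.EU_sup n I J Γ Δ]
  exact (Subgroup.commutator_mono le_rfl (D.EU_inf_le n I J Γ Δ)).trans
    (commutator_sup_inf_le (D.EU n I Γ) (D.EU n J Δ))

/-- Theorem 10: `[EU(2n,(I,Γ)+(J,Δ)), EU(2n,(I,Γ)∩(J,Δ))] ≤ [EU(2n,I,Γ), EU(2n,J,Δ)]`. -/
theorem statement7 {A : Type*} [Ring A] (D : FormRingData A) (n : ℕ) (hn : 3 ≤ n)
    (FI FJ : FormIdeal D) :
    ⁅D.EU n (FI.I ⊔ FJ.I) (FI.Gamma ⊔ FJ.Gamma),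
        D.EU n (FI.I ⊓ FJ.I) (FI.Gamma ⊓ FJ.Gamma)⁆ ≤
      ⁅D.EU n FI.I FI.Gamma, D.EU n FJ.I FJ.Gamma⁆ :=
  statement7_general D n FI.I FJ.I FI.Gamma FJ.Gamma
end
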